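/- arXiv:2602.22874 — 5 statements merged into one kernel-verified Lean document; each statement's English description precedes it below -/
import Mathlib

section
/- Let T and T' be triangulations of the same convex n-gon given in a linear representation with triangle-pair set Γ and conflict graph H = H(T,T'), let β ≥ 1, and let F be a flip sequence from the β-blow-up βT to βT'. If (Δ_i,Δ'_i) ≠ (Δ_j,Δ'_j) are both direct pairs of F and H contains the directed edge (Δ_i,Δ'_i) → (Δ_j,Δ'_j), then gone(Δ_i) < gone(Δ_j). -/
/-!
Let `a ≤ gone(Δ_q)` be a time at which an edge of `Λ(Δ'_q)` is present; it exists because `q` is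
direct. The conflict edge says that every edge of `Λ(Δ_p)` crosses every edge of `Λ(Δ'_q)`
(`crosses_fan`), and a triangulation has no crossings, so `Λ(Δ_p)` is absent at time `a`, and
`gone(Δ_p) ≤ a ≤ gone(Δ_q)`. The two values are positive, since `Λ(Δ_p)` is present at time `0`.
If they were equal, a single flip would remove the last edge of `Λ(Δ_p)` and the last edge of
`Λ(Δ_q)` simultaneously; a flip removes only one edge, but the two fans are disjoint
(`fan_edge_inj`) because they end in subdivision vertices of different spine edges.

Two points need care. The triangulations `g t` are unconstrained for `t > ℓ`; this is harmless
because `gone(Δ_p) ≤ ℓ`, the last triangulation containing all of `Λ(Δ'_q)`. A flip sequence of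
length `0` does not assert that `g 0` is a triangulation; in that case `βT = βT'` would contain
crossing fans, and `not_blow_eq` traces them back to edges of `T'` that cross each other.
-/


/-!
Triangulations of a convex polygon whose vertices are labelled `0, 1, …, n-1`
in order along the boundary (this labelling is the *linear representation*:
the vertices lie on the spine in this order, and the spine edges are the
boundary edges `{i, i+1}` for `0 ≤ i ≤ n-2`).
-/

/-- Two chords of a convex polygon cross: their endpoints interleave along the
boundary order. -/
def Crosses (e f : Finset ℕ) : Prop :=
  ∃ a b c d : ℕ, a < b ∧ c < d ∧ e = {a, b} ∧ f = {c, d} ∧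
    ((a < c ∧ c < b ∧ b < d) ∨ (c < a ∧ a < d ∧ d < b))

/-- Boundary edges of the convex polygon with vertices `0, 1, …, n-1`. -/
def BoundaryEdge (n : ℕ) (e : Finset ℕ) : Prop :=
  (∃ i : ℕ, i + 2 ≤ n ∧ e = {i, i + 1}) ∨ (2 ≤ n ∧ e = ({0, n - 1} : Finset ℕ))

/-- A chord of the convex `n`-gon: a 2-element subset of the vertex set. -/
def IsChord (n : ℕ) (e : Finset ℕ) : Prop :=
  e.card = 2 ∧ ∀ v ∈ e, v < n

/-- A triangulation of the convex `n`-gon: all boundary edges together with an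
inclusion-maximal family of pairwise non-crossing diagonals. -/
def IsTriangulation (n : ℕ) (T : Set (Finset ℕ)) : Prop :=
  (∀ e ∈ T, IsChord n e) ∧
  (∀ e : Finset ℕ, BoundaryEdge n e → e ∈ T) ∧
  (∀ e ∈ T, ∀ f ∈ T, ¬ Crosses e f) ∧
  (∀ e : Finset ℕ, IsChord n e → e ∉ T → ∃ f ∈ T, Crosses e f)

/-- `T'` is obtained from the triangulation `T` of the convex `n`-gon by a single
flip: one diagonal `e` of `T` is replaced by another diagonal `f` so that the
result is again a triangulation. -/
def Flip (n : ℕ) (T T' : Set (Finset ℕ)) : Prop :=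
  IsTriangulation n T ∧ IsTriangulation n T' ∧
  ∃ e f : Finset ℕ, e ∈ T ∧ f ∉ T ∧ T' = insert f (T \ {e})

/-- A flip sequence of length `ℓ` from `T` to `T'` in the convex `n`-gon. -/
def IsFlipSeq (n : ℕ) (T T' : Set (Finset ℕ)) (ℓ : ℕ) (g : ℕ → Set (Finset ℕ)) : Prop :=
  g 0 = T ∧ g ℓ = T' ∧ ∀ i, i < ℓ → Flip n (g i) (g (i + 1))

/-- The flip distance between two triangulations of the convex `n`-gon:
the minimal length of a flip sequence between them. -/
noncomputable def flipDist (n : ℕ) (T T' : Set (Finset ℕ)) : ℕ :=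
  sInf {ℓ : ℕ | ∃ g : ℕ → Set (Finset ℕ), IsFlipSeq n T T' ℓ g}

/-- `{x, y, z}` is a triangle of the triangulation `T` (its three chords belong to
`T`; for triangulations of a convex polygon this means it is a face). -/
def IsTriangle (T : Set (Finset ℕ)) (x y z : ℕ) : Prop :=
  x ≠ y ∧ y ≠ z ∧ x ≠ z ∧
  ({x, y} : Finset ℕ) ∈ T ∧ ({y, z} : Finset ℕ) ∈ T ∧ ({x, z} : Finset ℕ) ∈ T

/-- `p = (a, u, u')` encodes a triangle pair of `(T, T')`: the triangle
`{a, a+1, u}` of `T` and the triangle `{a, a+1, u'}` of `T'` share the spine edge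
`{a, a+1}`, and each of the two triangles has exactly one edge on the spine
(the apex is not consecutive with the spine edge). -/
def IsTrianglePair (n : ℕ) (T T' : Set (Finset ℕ)) (p : ℕ × ℕ × ℕ) : Prop :=
  p.1 + 2 ≤ n ∧ p.2.1 < n ∧ p.2.2 < n ∧
  IsTriangle T p.1 (p.1 + 1) p.2.1 ∧ IsTriangle T' p.1 (p.1 + 1) p.2.2 ∧
  p.2.1 + 1 ≠ p.1 ∧ p.2.1 ≠ p.1 + 2 ∧ p.2.2 + 1 ≠ p.1 ∧ p.2.2 ≠ p.1 + 2

/-- The set `Γ` of triangle pairs of `(T, T')`. -/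
def Gamma (n : ℕ) (T T' : Set (Finset ℕ)) : Set (ℕ × ℕ × ℕ) :=
  {p | IsTrianglePair n T T' p}

/-- The left endpoints of the spine edges that carry a triangle pair. -/
def leftSet (n : ℕ) (T T' : Set (Finset ℕ)) : Set ℕ :=
  {a : ℕ | ∃ u u' : ℕ, (a, u, u') ∈ Gamma n T T'}

/-- The embedding of the original vertices into the vertex set of the β-blow-up:
`β` new subdivision vertices are inserted inside each spine edge carrying a
triangle pair. -/
noncomputable def emb (n : ℕ) (T T' : Set (Finset ℕ)) (β : ℕ) (i : ℕ) : ℕ :=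
  i + β * ({a ∈ leftSet n T T' | a < i}).ncard

/-- Number of vertices of the blown-up polygon. -/
noncomputable def blowSize (n : ℕ) (T T' : Set (Finset ℕ)) (β : ℕ) : ℕ :=
  n + β * (Gamma n T T').ncard

/-- The set `V(Δ)` of the `β` new subdivision vertices of the spine edge of the
pair `p`, in the β-blow-up. -/
noncomputable def subVerts (n : ℕ) (T T' : Set (Finset ℕ)) (β : ℕ) (p : ℕ × ℕ × ℕ) : Set ℕ :=
  {v : ℕ | ∃ k : ℕ, 1 ≤ k ∧ k ≤ β ∧ v = emb n T T' β p.1 + k}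

/-- The fan `Λ(Δ)` of the pair `p` in the β-blow-up of `T`: the `β` edges from
the apex of `Δ` to the subdivision vertices `V(Δ)`. -/
noncomputable def fanT (n : ℕ) (T T' : Set (Finset ℕ)) (β : ℕ) (p : ℕ × ℕ × ℕ) : Set (Finset ℕ) :=
  {E | ∃ k : ℕ, 1 ≤ k ∧ k ≤ β ∧
    E = ({emb n T T' β p.2.1, emb n T T' β p.1 + k} : Finset ℕ)}

/-- The fan `Λ(Δ')` of the pair `p` in the β-blow-up of `T'`. -/
noncomputable def fanT' (n : ℕ) (T T' : Set (Finset ℕ)) (β : ℕ) (p : ℕ × ℕ × ℕ) : Set (Finset ℕ) :=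
  {E | ∃ k : ℕ, 1 ≤ k ∧ k ≤ β ∧
    E = ({emb n T T' β p.2.2, emb n T T' β p.1 + k} : Finset ℕ)}

/-- The β-blow-up `βT` of `T`: images of the edges of `T` that are not subdivided,
the subdivided boundary pieces, and the fans `Λ(Δ)`. -/
noncomputable def blowT (n : ℕ) (T T' : Set (Finset ℕ)) (β : ℕ) : Set (Finset ℕ) :=
  {E | ∃ i j : ℕ, ({i, j} : Finset ℕ) ∈ T ∧
      (¬ ∃ a ∈ leftSet n T T', ({i, j} : Finset ℕ) = {a, a + 1}) ∧
      E = ({emb n T T' β i, emb n T T' β j} : Finset ℕ)} ∪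
  {E | ∃ a ∈ leftSet n T T', ∃ k : ℕ, k ≤ β ∧
      E = ({emb n T T' β a + k, emb n T T' β a + k + 1} : Finset ℕ)} ∪
  ⋃ p ∈ Gamma n T T', fanT n T T' β p

/-- The β-blow-up `βT'` of `T'`. -/
noncomputable def blowT' (n : ℕ) (T T' : Set (Finset ℕ)) (β : ℕ) : Set (Finset ℕ) :=
  {E | ∃ i j : ℕ, ({i, j} : Finset ℕ) ∈ T' ∧
      (¬ ∃ a ∈ leftSet n T T', ({i, j} : Finset ℕ) = {a, a + 1}) ∧
      E = ({emb n T T' β i, emb n T T' β j} : Finset ℕ)} ∪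
  {E | ∃ a ∈ leftSet n T T', ∃ k : ℕ, k ≤ β ∧
      E = ({emb n T T' β a + k, emb n T T' β a + k + 1} : Finset ℕ)} ∪
  ⋃ p ∈ Gamma n T T', fanT' n T T' β p

/-- Crossing of two chords `{a,b}` and `{c,d}` of a "polygon" with vertices on the
rational line (used to express crossing of fan edges, whose subdivision endpoints
are represented by midpoints of spine edges). -/
def crossQ (a b c d : ℚ) : Prop :=
  (min a b < min c d ∧ min c d < max a b ∧ max a b < max c d) ∨
  (min c d < min a b ∧ min a b < max c d ∧ max c d < max a b)

/-- The directed edge `p → q` of the conflict graph `H(T,T')`: the fan edges of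
`Λ(Δ_p)` (from the apex of `Δ_p` to the inside of its spine edge) cross the fan
edges of `Λ(Δ'_q)`. -/
def ConflictEdge (n : ℕ) (T T' : Set (Finset ℕ)) (p q : ℕ × ℕ × ℕ) : Prop :=
  p ∈ Gamma n T T' ∧ q ∈ Gamma n T T' ∧ p ≠ q ∧
  crossQ (p.2.1 : ℚ) ((p.1 : ℚ) + 1 / 2) (q.2.2 : ℚ) ((q.1 : ℚ) + 1 / 2)

/-- `S` contains a directed cycle of the directed graph with edge relation `E`. -/
def HasDicycleIn {α : Type*} (E : α → α → Prop) (S : Set α) : Prop :=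
  ∃ (k : ℕ) (f : ℕ → α), 0 < k ∧ (∀ i, i ≤ k → f i ∈ S) ∧
    (∀ i, i < k → E (f i) (f (i + 1))) ∧ f k = f 0

/-- `ac(H)`: the maximum cardinality of a subset of `Γ` inducing no directed cycle
in the conflict graph `H(T,T')`. -/
noncomputable def acNum (n : ℕ) (T T' : Set (Finset ℕ)) : ℕ :=
  sSup {m : ℕ | ∃ S : Set (ℕ × ℕ × ℕ), S ⊆ Gamma n T T' ∧
    ¬ HasDicycleIn (ConflictEdge n T T') S ∧ S.ncard = m}

/-- `gone(Δ)` for the flip sequence `g`: the least index `t` such that `g t`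
contains no edge of the fan `Λ(Δ)`. -/
noncomputable def gone (n : ℕ) (T T' : Set (Finset ℕ)) (β : ℕ)
    (g : ℕ → Set (Finset ℕ)) (p : ℕ × ℕ × ℕ) : ℕ :=
  sInf {t : ℕ | ∀ E ∈ fanT n T T' β p, E ∉ g t}

/-- The pair `p` is *direct* with respect to the flip sequence `g`: some
triangulation `g a` with `a ≤ gone(Δ)` contains an edge of `Λ(Δ')`. -/
def DirectPair (n : ℕ) (T T' : Set (Finset ℕ)) (β : ℕ)
    (g : ℕ → Set (Finset ℕ)) (p : ℕ × ℕ × ℕ) : Prop :=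
  ∃ a : ℕ, a ≤ gone n T T' β g p ∧ ∃ E ∈ fanT' n T T' β p, E ∈ g a

/-- Reachability in the graph with vertex set `V` and edge set `Ed`. -/
def GReach (V : Set ℕ) (Ed : Set (Finset ℕ)) : ℕ → ℕ → Prop :=
  Relation.ReflTransGen (fun u v => u ∈ V ∧ v ∈ V ∧ ({u, v} : Finset ℕ) ∈ Ed)

/-- An *above* pair: both apexes lie to the left of the spine edge,
`u < u' < a < a+1`. -/
def AbovePair (p : ℕ × ℕ × ℕ) : Prop := p.2.1 < p.2.2 ∧ p.2.2 < p.1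

/-- A *below* pair: both apexes lie to the right of the spine edge,
`a < a+1 < u < u'`. -/
def BelowPair (p : ℕ × ℕ × ℕ) : Prop := p.1 + 1 < p.2.1 ∧ p.2.1 < p.2.2

/-- A *crossing* pair: `u' < a < a+1 < u`. -/
def CrossingPair (p : ℕ × ℕ × ℕ) : Prop := p.2.2 < p.1 ∧ p.1 + 1 < p.2.1

/-! ### Crossing chords -/

/-- Two listings of the same chord agree up to order. -/
lemma pair_cases {x y z w : ℕ} (h : ({x, y} : Finset ℕ) = {z, w}) :
    (x = z ∧ y = w) ∨ (x = w ∧ y = z) := by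
  apply Set.pair_eq_pair_iff.1
  rw [← Finset.coe_pair, h, Finset.coe_pair]

lemma crosses_of_lt {x y z w : ℕ} (h1 : x < z) (h2 : z < y) (h3 : y < w) :
    Crosses {x, y} {z, w} :=
  ⟨x, y, z, w, h1.trans h2, h2.trans h3, rfl, rfl, Or.inl ⟨h1, h2, h3⟩⟩

lemma Crosses.symm {e f : Finset ℕ} (h : Crosses e f) : Crosses f e := by
  obtain ⟨a, b, c, d, h1, h2, h3, h4, h5⟩ := h
  exact ⟨c, d, a, b, h2, h1, h4, h3, h5.symm⟩

/-- The possible interleavings of two chords with one integer endpoint and one midpoint each. -/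
lemma crossQ_cases {u a v b : ℕ} (h : crossQ (u : ℚ) ((a : ℚ) + 1 / 2) (v : ℚ) ((b : ℚ) + 1 / 2)) :
    (u < v ∧ v ≤ a ∧ a < b) ∨ (v < u ∧ u ≤ b ∧ b < a) ∨
    (u ≤ b ∧ b < a ∧ a < v) ∨ (v ≤ a ∧ a < b ∧ b < u) ∨
    (b < u ∧ u < v ∧ v ≤ a) ∨ (a < v ∧ v < u ∧ u ≤ b) ∨
    (a < b ∧ b < u ∧ u < v) ∨ (b < a ∧ a < v ∧ v < u) := by
  have h1 : ∀ i j : ℕ, (i : ℚ) < (j : ℚ) + 1 / 2 ↔ i ≤ j := by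
    intro i j
    rw [← Nat.lt_succ_iff, show i < j.succ ↔ 2 * i < 2 * j + 1 by omega, ← Nat.cast_lt (α := ℚ)]
    push_cast
    constructor <;> intro h <;> linarith
  have h2 : ∀ i j : ℕ, (i : ℚ) + 1 / 2 < (j : ℚ) ↔ i < j := by
    intro i j
    rw [show i < j ↔ 2 * i + 1 < 2 * j by omega, ← Nat.cast_lt (α := ℚ)]
    push_cast
    constructor <;> intro h <;> linarith
  unfold crossQ at h
  simp only [min_lt_iff, lt_min_iff, max_lt_iff, lt_max_iff, h1, h2, Nat.cast_lt,
    add_lt_add_iff_right] at h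
  rcases le_or_gt u a with h3 | h3 <;> rcases le_or_gt v b with h4 | h4 <;>
    rcases h with ⟨h5, h6, h7⟩ | ⟨h5, h6, h7⟩ <;> omega

/-! ### Positions in the blow-up -/

lemma emb_lt {n : ℕ} {T T' : Set (Finset ℕ)} (β : ℕ) {i j : ℕ} (h : i < j) :
    emb n T T' β i < emb n T T' β j := by
  have hle : ({a ∈ leftSet n T T' | a < i}).ncard ≤ ({a ∈ leftSet n T T' | a < j}).ncard :=
    Set.ncard_le_ncard (fun x hx => ⟨hx.1, hx.2.trans h⟩)
      ((Set.finite_Iio j).subset fun x hx => hx.2)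
  have := Nat.mul_le_mul_left β hle
  unfold emb
  omega

/-- All `β` subdivision vertices of a spine edge `{a, a+1}` lie before every later original
vertex. -/
lemma emb_add_lt {n : ℕ} {T T' : Set (Finset ℕ)} (β : ℕ) {a j : ℕ}
    (ha : a ∈ leftSet n T T') (h : a < j) :
    emb n T T' β a + β < emb n T T' β j := by
  have hlt : ({x ∈ leftSet n T T' | x < a}).ncard < ({x ∈ leftSet n T T' | x < j}).ncard := by
    apply Set.ncard_lt_ncard _ ((Set.finite_Iio j).subset fun x hx => hx.2)
    refine ⟨fun x hx => ⟨hx.1, hx.2.trans h⟩, fun hs => ?_⟩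
    exact lt_irrefl a (hs (show a ∈ {x ∈ leftSet n T T' | x < j} from ⟨ha, h⟩)).2
  have := Nat.mul_le_mul_left β (Nat.succ_le_of_lt hlt)
  unfold emb
  rw [Nat.mul_succ] at this
  omega

lemma emb_inj {n : ℕ} {T T' : Set (Finset ℕ)} {β i j : ℕ}
    (h : emb n T T' β i = emb n T T' β j) : i = j := by
  rcases lt_trichotomy i j with hij | hij | hij
  · have := emb_lt (n := n) (T := T) (T' := T') β hij
    omega
  · exact hij
  · have := emb_lt (n := n) (T := T) (T' := T') β hij
    omega

lemma emb_ne_sub {n : ℕ} {T T' : Set (Finset ℕ)} {β a i k : ℕ} (ha : a ∈ leftSet n T T')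
    (hk : 1 ≤ k) (hk' : k ≤ β) : emb n T T' β i ≠ emb n T T' β a + k := by
  rcases lt_trichotomy i a with hi | hi | hi
  · have := emb_lt (n := n) (T := T) (T' := T') β hi
    omega
  · subst hi
    omega
  · have := emb_add_lt β ha hi
    omega

lemma sub_inj {n : ℕ} {T T' : Set (Finset ℕ)} {β a b k m : ℕ} (ha : a ∈ leftSet n T T')
    (hb : b ∈ leftSet n T T') (hk : k ≤ β) (hm : m ≤ β)
    (h : emb n T T' β a + k = emb n T T' β b + m) : a = b := by
  rcases lt_trichotomy a b with hi | hi | hi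
  · have := emb_add_lt β ha hi
    omega
  · exact hi
  · have := emb_add_lt β hb hi
    omega

/-- A fan edge determines both its apex and the spine edge it ends in. -/
lemma fan_edge_inj {n : ℕ} {T T' : Set (Finset ℕ)} {β a b u v k m : ℕ}
    (ha : a ∈ leftSet n T T') (hb : b ∈ leftSet n T T') (hk' : k ≤ β)
    (hm : 1 ≤ m) (hm' : m ≤ β)
    (h : ({emb n T T' β u, emb n T T' β a + k} : Finset ℕ) =
      {emb n T T' β v, emb n T T' β b + m}) : u = v ∧ a = b := by
  rcases pair_cases h with ⟨h1, h2⟩ | ⟨h1, h2⟩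
  · exact ⟨emb_inj h1, sub_inj ha hb hk' hm' h2⟩
  · exact absurd h1 (emb_ne_sub hb hm hm')

/-- Fan edges that cross when drawn to the spine-edge midpoints also cross in the blow-up, whichever
subdivision vertices they end in. -/
lemma crosses_fan {n : ℕ} {T T' : Set (Finset ℕ)} {β a b u v k m : ℕ}
    (ha : a ∈ leftSet n T T') (hb : b ∈ leftSet n T T') (hk : 1 ≤ k) (hk' : k ≤ β)
    (hm : 1 ≤ m) (hm' : m ≤ β)
    (h : crossQ (u : ℚ) ((a : ℚ) + 1 / 2) (v : ℚ) ((b : ℚ) + 1 / 2)) :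
    Crosses {emb n T T' β u, emb n T T' β a + k} {emb n T T' β v, emb n T T' β b + m} := by
  have e1 : ∀ i j, i ≤ j → emb n T T' β i ≤ emb n T T' β j := by
    intro i j hij
    rcases hij.lt_or_eq with h | h
    · exact (emb_lt β h).le
    · rw [h]
  have e0 : ∀ i j, i < j → emb n T T' β i < emb n T T' β j := fun i j => emb_lt β
  have e2 : ∀ j, a < j → emb n T T' β a + β < emb n T T' β j := fun j => emb_add_lt β ha
  have e3 : ∀ j, b < j → emb n T T' β b + β < emb n T T' β j := fun j => emb_add_lt β hb
  have uv := e0 u v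
  have vu := e0 v u
  have ua := e1 u a
  have ub := e1 u b
  have va := e1 v a
  have vb := e1 v b
  have au := e2 u
  have av := e2 v
  have ab := e2 b
  have bu := e3 u
  have bv := e3 v
  have ba := e3 a
  clear e0 e1 e2 e3
  rcases crossQ_cases h with h | h | h | h | h | h | h | h
  · apply crosses_of_lt <;> omega
  · apply Crosses.symm
    apply crosses_of_lt <;> omega
  · rw [Finset.pair_comm (emb n T T' β v)]
    apply crosses_of_lt <;> omega
  · rw [Finset.pair_comm (emb n T T' β u)]
    apply Crosses.symm
    apply crosses_of_lt <;> omega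
  · rw [Finset.pair_comm (emb n T T' β v)]
    apply Crosses.symm
    apply crosses_of_lt <;> omega
  · rw [Finset.pair_comm (emb n T T' β u)]
    apply crosses_of_lt <;> omega
  · rw [Finset.pair_comm (emb n T T' β u), Finset.pair_comm (emb n T T' β v)]
    apply crosses_of_lt <;> omega
  · rw [Finset.pair_comm (emb n T T' β u), Finset.pair_comm (emb n T T' β v)]
    apply Crosses.symm
    apply crosses_of_lt <;> omega

/-! ### Fans in the blown-up triangulations -/

lemma mem_leftSet {n : ℕ} {T T' : Set (Finset ℕ)} {p : ℕ × ℕ × ℕ} (hp : p ∈ Gamma n T T') :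
    p.1 ∈ leftSet n T T' := ⟨p.2.1, p.2.2, hp⟩

/-- The fans of two triangles of `T'` do not cross: otherwise sides of the two triangles would.
This uses that the apex of a triangle in `Γ` is not adjacent to its spine edge. -/
lemma not_crossQ_of_triangles {n : ℕ} {T T' : Set (Finset ℕ)} (hT' : IsTriangulation n T')
    {r q : ℕ × ℕ × ℕ} (hr : r ∈ Gamma n T T') (hq : q ∈ Gamma n T T') :
    ¬ crossQ (r.2.2 : ℚ) ((r.1 : ℚ) + 1 / 2) (q.2.2 : ℚ) ((q.1 : ℚ) + 1 / 2) := by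
  intro h
  obtain ⟨a, x', x⟩ := r
  obtain ⟨b, y', y⟩ := q
  obtain ⟨-, -, -, -, ⟨-, r2, r3, -, r5, r6⟩, -, -, r7, r8⟩ := hr
  obtain ⟨-, -, -, -, ⟨-, q2, q3, -, q5, q6⟩, -, -, q7, q8⟩ := hq
  simp only at *
  have nc : ∀ {x y z w : ℕ}, ({x, y} : Finset ℕ) ∈ T' → ({z, w} : Finset ℕ) ∈ T' →
      ¬ (x < z ∧ z < y ∧ y < w) :=
    fun h1 h2 h3 => hT'.2.2.1 _ h1 _ h2 (crosses_of_lt h3.1 h3.2.1 h3.2.2)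
  have r5' := Finset.pair_comm (a + 1) x ▸ r5
  have r6' := Finset.pair_comm a x ▸ r6
  have q5' := Finset.pair_comm (b + 1) y ▸ q5
  have q6' := Finset.pair_comm b y ▸ q6
  rcases crossQ_cases h with h | h | h | h | h | h | h | h
  · have := nc r5' q5'
    omega
  · have := nc q5' r5'
    omega
  · -- If `b + 1 = a`, then `x ≠ b` because the apex `x` is not adjacent to `a`.
    have := nc r6' q5
    have := nc r6' q6
    omega
  · have := nc q6' r5
    have := nc q6' r6
    omega
  · have := nc q6 r5'
    omega
  · have := nc r6 q5'
    omega
  · have := nc r6 q6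
    omega
  · have := nc q6 r6
    omega

/-- A conflict edge rules out `βT = βT'`. -/
lemma not_blow_eq {n : ℕ} {T T' : Set (Finset ℕ)} (hT' : IsTriangulation n T') {β : ℕ}
    (hβ : 1 ≤ β) {p q : ℕ × ℕ × ℕ} (hE : ConflictEdge n T T' p q) :
    blowT n T T' β ≠ blowT' n T T' β := by
  intro heq
  obtain ⟨hp, hq, -, hc⟩ := hE
  have ha := mem_leftSet hp
  have hmem : ({emb n T T' β p.2.1, emb n T T' β p.1 + 1} : Finset ℕ) ∈ blowT' n T T' β := by
    rw [← heq]
    exact Or.inr (Set.mem_biUnion hp ⟨1, le_rfl, hβ, rfl⟩)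
  rcases hmem with (⟨i, j, -, -, h⟩ | ⟨b, hb, k, hk, h⟩) | h
  · -- Images of edges of `T'` avoid the subdivision vertices.
    rcases pair_cases h with ⟨-, h2⟩ | ⟨-, h2⟩
    · exact emb_ne_sub ha le_rfl hβ h2.symm
    · exact emb_ne_sub ha le_rfl hβ h2.symm
  · -- On the subdivided spine edge, the apex would have to be an endpoint of that edge.
    obtain ⟨-, -, -, ⟨-, h2, h3, -⟩, -⟩ := hp
    have hb' := emb_add_lt β hb (lt_add_one b)
    have ha' := emb_add_lt β ha (lt_add_one p.1)
    have hu := emb_lt (n := n) (T := T) (T' := T') β (i := p.2.1) (j := p.1)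
    have hu' := emb_lt (n := n) (T := T) (T' := T') β (i := p.1 + 1) (j := p.2.1)
    have hab := emb_add_lt β ha (j := b)
    have hba := emb_add_lt β hb (j := p.1)
    have hab1 : p.1 = b → emb n T T' β p.1 = emb n T T' β b := fun h => by rw [h]
    have hcase : p.2.1 < p.1 ∨ p.1 + 1 < p.2.1 := by omega
    have hub := emb_add_lt β hb (j := p.2.1)
    have hub' := emb_lt (n := n) (T := T) (T' := T') β (i := p.2.1) (j := b)
    rcases pair_cases h with ⟨e1, e2⟩ | ⟨e1, e2⟩ <;> omega
  · obtain ⟨r, hr, m, hm, hm', h⟩ := Set.mem_iUnion₂.1 h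
    obtain ⟨h1, h2⟩ := fan_edge_inj ha (mem_leftSet hr) hβ hm hm' h
    rw [h1, h2] at hc
    exact not_crossQ_of_triangles hT' hr hq hc

/-! ### Comparison of the vanishing times -/

/-- If `p ≠ q` are direct pairs of a flip sequence `F` and the
conflict graph contains the directed edge `p → q`, then `gone(Δ_p) < gone(Δ_q)`. -/
theorem gone_lt_of_conflict_edge
    (n : ℕ) (hn : 3 ≤ n) (T T' : Set (Finset ℕ))
    (hT : IsTriangulation n T) (hT' : IsTriangulation n T')
    (β : ℕ) (hβ : 1 ≤ β) (ℓ : ℕ) (g : ℕ → Set (Finset ℕ))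
    (hF : IsFlipSeq (blowSize n T T' β) (blowT n T T' β) (blowT' n T T' β) ℓ g)
    (p q : ℕ × ℕ × ℕ) (hp : p ∈ Gamma n T T') (hq : q ∈ Gamma n T T') (hpq : p ≠ q)
    (hdp : DirectPair n T T' β g p) (hdq : DirectPair n T T' β g q)
    (hE : ConflictEdge n T T' p q) :
    gone n T T' β g p < gone n T T' β g q := by
  obtain ⟨h0, hl, hflip⟩ := hF
  have hc := hE.2.2.2
  have hcross : ∀ E ∈ fanT n T T' β p, ∀ E' ∈ fanT' n T T' β q, Crosses E E' := by
    rintro E ⟨k, hk, hk', rfl⟩ E' ⟨m, hm, hm', rfl⟩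
    exact crosses_fan (mem_leftSet hp) (mem_leftSet hq) hk hk' hm hm' hc
  have hℓ : 0 < ℓ := by
    rcases Nat.eq_zero_or_pos ℓ with h | h
    · subst h
      exact absurd (h0.symm.trans hl) (not_blow_eq hT' hβ hE)
    · exact h
  have htri : ∀ t ≤ ℓ, IsTriangulation (blowSize n T T' β) (g t) := by
    intro t ht
    rcases Nat.eq_zero_or_pos t with rfl | h
    · exact (hflip 0 hℓ).1
    · have := (hflip (t - 1) (by omega)).2.1
      rwa [Nat.sub_add_cancel h] at this
  have habsent : ∀ t ≤ ℓ, (∃ E' ∈ fanT' n T T' β q, E' ∈ g t) →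
      t ∈ {t : ℕ | ∀ E ∈ fanT n T T' β p, E ∉ g t} := by
    rintro t ht ⟨E', hE', hg'⟩ E hE hg
    exact (htri t ht).2.2.1 E hg E' hg' (hcross E hE E' hE')
  have hℓmem := habsent ℓ le_rfl ⟨{emb n T T' β q.2.2, emb n T T' β q.1 + 1},
    ⟨1, le_rfl, hβ, rfl⟩, by
      rw [hl]
      exact Or.inr (Set.mem_biUnion hq ⟨1, le_rfl, hβ, rfl⟩)⟩
  obtain ⟨a, ha, hEa⟩ := hdq
  rcases lt_or_ge ℓ a with hal | hal
  · exact lt_of_le_of_lt (Nat.sInf_le hℓmem) (lt_of_lt_of_le hal ha)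
  have hpa : gone n T T' β g p ≤ a := Nat.sInf_le (habsent a hal hEa)
  refine lt_of_le_of_ne (hpa.trans ha) fun heq => ?_
  have hpmem : ∀ E ∈ fanT n T T' β p, E ∉ g (gone n T T' β g p) := Nat.sInf_mem ⟨ℓ, hℓmem⟩
  have hpos : 0 < gone n T T' β g p := by
    rcases Nat.eq_zero_or_pos (gone n T T' β g p) with h | h
    · rw [h, h0] at hpmem
      exact (hpmem {emb n T T' β p.2.1, emb n T T' β p.1 + 1} ⟨1, le_rfl, hβ, rfl⟩
        (Or.inr (Set.mem_biUnion hp ⟨1, le_rfl, hβ, rfl⟩))).elim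
    · exact h
  -- Positivity matters here: `sInf ∅ = 0` would be the junk value of a fan that never vanishes.
  have hqmem : ∀ E ∈ fanT n T T' β q, E ∉ g (gone n T T' β g q) :=
    Nat.sInf_mem (Nat.nonempty_of_pos_sInf (heq ▸ hpos : 0 < gone n T T' β g q))
  rw [← heq] at hqmem
  have hplast : gone n T T' β g p - 1 ∉ {t : ℕ | ∀ E ∈ fanT n T T' β p, E ∉ g t} :=
    Nat.notMem_of_lt_sInf (Nat.sub_lt hpos one_pos)
  have hqlast : gone n T T' β g p - 1 ∉ {t : ℕ | ∀ E ∈ fanT n T T' β q, E ∉ g t} :=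
    Nat.notMem_of_lt_sInf (show _ < gone n T T' β g q by omega)
  simp only [Set.mem_ofPred_eq, not_forall, not_not] at hplast hqlast
  obtain ⟨E₁, hE₁, hg₁⟩ := hplast
  obtain ⟨E₂, hE₂, hg₂⟩ := hqlast
  obtain ⟨-, -, e, f, -, -, hstep⟩ := hflip (gone n T T' β g p - 1) (by omega)
  rw [Nat.sub_add_cancel hpos] at hstep
  have hremoved : ∀ E ∈ g (gone n T T' β g p - 1), E ∉ g (gone n T T' β g p) → E = e := by
    intro E hE hE'
    by_contra hne
    exact hE' (hstep ▸ Or.inr ⟨hE, hne⟩)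
  have h12 : E₁ = E₂ :=
    (hremoved E₁ hg₁ (hpmem E₁ hE₁)).trans (hremoved E₂ hg₂ (hqmem E₂ hE₂)).symm
  obtain ⟨k, hk, hk', rfl⟩ := hE₁
  obtain ⟨m, hm, hm', rfl⟩ := hE₂
  obtain ⟨-, hpq1⟩ := fan_edge_inj (mem_leftSet hp) (mem_leftSet hq) hk' hm hm' h12
  -- Edges ending on the same spine edge share a midpoint, hence do not cross.
  have := crossQ_cases hc
  omega
end

section
/- Let T and T' be triangulations of the same convex n-gon given in a linear representation, with triangle-pair set Γ and conflict graph H = H(T,T'). Let S ⊆ Γ be such that every pair in S is an above pair, a below pair, or a crossing pair, and every directed edge of H between two pairs of S is either between two pairs of the same type, or is directed from an above pair to a crossing pair, from an above pair to a below pair, or from a crossing pair to a below pair. Then S induces no directed cycle in H. -/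
theorem IsTriangulation.not_interleave {n : ℕ} {T : Set (Finset ℕ)}
    (hT : IsTriangulation n T) {a b c d : ℕ}
    (hab : ({a, b} : Finset ℕ) ∈ T) (hcd : ({c, d} : Finset ℕ) ∈ T)
    (hac : a < c) (hcb : c < b) (hbd : b < d) : False :=
  hT.2.2.1 _ hab _ hcd
    ⟨a, b, c, d, hac.trans hcb, hcb.trans hbd, rfl, rfl, Or.inl ⟨hac, hcb, hbd⟩⟩

/-- If `b = q.1` were to the left of `a = p.1`, the conflict would place the apex `u` of
`p` in `T` strictly between the apex `v` of `q` and `b + 1`, so the edges `{v, b + 1}` and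
`{u, a + 1}` of `T` would cross. -/
theorem above_lt {n : ℕ} {T T' : Set (Finset ℕ)} (hT : IsTriangulation n T)
    {p q : ℕ × ℕ × ℕ} (hp : AbovePair p) (hq : AbovePair q)
    (h : ConflictEdge n T T' p q) : p.1 < q.1 := by
  obtain ⟨a, u, u'⟩ := p
  obtain ⟨b, v, v'⟩ := q
  obtain ⟨hpG, hqG, -, hc⟩ := h
  obtain ⟨-, -, -, ⟨-, -, -, -, hpT, -⟩, -⟩ := hpG
  obtain ⟨-, -, -, ⟨-, -, -, -, hqT, -⟩, -⟩ := hqG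
  simp only [AbovePair] at *
  have h1 : (u : ℚ) < a := by exact_mod_cast hp.1.trans hp.2
  have h2 : (v' : ℚ) < b := by exact_mod_cast hq.2
  simp only [crossQ] at hc
  rw [min_eq_left (by linarith), min_eq_left (by linarith), max_eq_right (by linarith),
    max_eq_right (by linarith)] at hc
  rcases hc with ⟨-, -, h3⟩ | ⟨h3, h4, h5⟩
  · have : (a : ℚ) < b := by linarith
    exact_mod_cast this
  · have h6 : (b : ℚ) < a := by linarith
    have h7 : (u : ℚ) < (b + 1 : ℕ) := by push_cast; linarith
    have h6' : b < a := by exact_mod_cast h6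
    have h7' : u < b + 1 := by exact_mod_cast h7
    have h3' : v' < u := by exact_mod_cast h3
    rw [Finset.pair_comm] at hpT hqT
    exact (hT.not_interleave hqT hpT (hq.1.trans h3') h7' (by omega)).elim

/-- If `b = q.1` were to the left of `a = p.1`, the conflict would force
`b < a < v' < u < u'`, so the edges `{b, v'}` and `{a, u'}` of `T'` would cross. -/
theorem below_lt {n : ℕ} {T T' : Set (Finset ℕ)} (hT' : IsTriangulation n T')
    {p q : ℕ × ℕ × ℕ} (hp : BelowPair p) (hq : BelowPair q)
    (h : ConflictEdge n T T' p q) : p.1 < q.1 := by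
  obtain ⟨a, u, u'⟩ := p
  obtain ⟨b, v, v'⟩ := q
  obtain ⟨hpG, hqG, -, hc⟩ := h
  obtain ⟨-, -, -, -, ⟨-, -, -, -, -, hpT⟩, -⟩ := hpG
  obtain ⟨-, -, -, -, ⟨-, -, -, -, -, hqT⟩, -⟩ := hqG
  simp only [BelowPair] at *
  have h1 : (a : ℚ) + 1 < u := by exact_mod_cast hp.1
  have h2 : (b : ℚ) + 1 < v' := by exact_mod_cast hq.1.trans hq.2
  simp only [crossQ] at hc
  rw [min_eq_right (by linarith), min_eq_right (by linarith), max_eq_left (by linarith),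
    max_eq_left (by linarith)] at hc
  rcases hc with ⟨h3, -, -⟩ | ⟨h3, h4, h5⟩
  · have : (a : ℚ) < b := by linarith
    exact_mod_cast this
  · have h6 : (b : ℚ) < a := by linarith
    have h7 : (a : ℚ) < v' := by linarith
    have h6' : b < a := by exact_mod_cast h6
    have h7' : a < v' := by exact_mod_cast h7
    have h5' : v' < u := by exact_mod_cast h5
    exact (hT'.not_interleave hqT hpT h6' h7' (h5'.trans hp.2)).elim

/-- The fan of `p` in `T` leaves its spine edge to the
right and the fan of `q` in `T'` leaves its spine edge to the left, so they can only
meet when `p` is to the left of `q`. -/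
theorem crossing_lt {n : ℕ} {T T' : Set (Finset ℕ)}
    {p q : ℕ × ℕ × ℕ} (hp : CrossingPair p) (hq : CrossingPair q)
    (h : ConflictEdge n T T' p q) : p.1 < q.1 := by
  obtain ⟨a, u, u'⟩ := p
  obtain ⟨b, v, v'⟩ := q
  obtain ⟨-, -, -, hc⟩ := h
  simp only [CrossingPair] at *
  have h1 : (a : ℚ) + 1 < u := by exact_mod_cast hp.2
  have h2 : (v' : ℚ) < b := by exact_mod_cast hq.1
  simp only [crossQ] at hc
  rw [min_eq_right (by linarith), min_eq_left (by linarith), max_eq_left (by linarith),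
    max_eq_right (by linarith)] at hc
  have : (a : ℚ) < b := by
    rcases hc with ⟨h3, h4, h5⟩ | ⟨h3, h4, h5⟩ <;> linarith
  exact_mod_cast this

open Classical in
/-- The lexicographic potential (rank of the type, left endpoint) as a natural number.
The weight `n` of the rank dominates because left endpoints are less than `n`. -/
noncomputable def potential (n : ℕ) (p : ℕ × ℕ × ℕ) : ℕ :=
  (if AbovePair p then 0 else if CrossingPair p then n else 2 * n) + p.1

theorem potential_above {n : ℕ} {p : ℕ × ℕ × ℕ} (h : AbovePair p) :
    potential n p = p.1 := by
  simp [potential, h]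

theorem potential_crossing {n : ℕ} {p : ℕ × ℕ × ℕ} (h : CrossingPair p) :
    potential n p = n + p.1 := by
  have : ¬ AbovePair p := by
    simp only [AbovePair, CrossingPair] at *
    omega
  simp [potential, h, this]

theorem potential_below {n : ℕ} {p : ℕ × ℕ × ℕ} (h : BelowPair p) :
    potential n p = 2 * n + p.1 := by
  have h1 : ¬ AbovePair p := by
    simp only [AbovePair, BelowPair] at *
    omega
  have h2 : ¬ CrossingPair p := by
    simp only [CrossingPair, BelowPair] at *
    omega
  simp [potential, h1, h2]

/-- If every pair of `S ⊆ Γ` is an above, below, or crossing pair,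
and every directed conflict edge inside `S` is between two pairs of the same type
or goes from an above pair to a crossing pair, from an above pair to a below pair,
or from a crossing pair to a below pair, then `S` induces no directed cycle in the
conflict graph. -/
theorem acyclic_of_pair_types
    (n : ℕ) (hn : 3 ≤ n) (T T' : Set (Finset ℕ))
    (hT : IsTriangulation n T) (hT' : IsTriangulation n T')
    (S : Set (ℕ × ℕ × ℕ)) (hS : S ⊆ Gamma n T T')
    (htype : ∀ p ∈ S, AbovePair p ∨ BelowPair p ∨ CrossingPair p)
    (hedge : ∀ p ∈ S, ∀ q ∈ S, ConflictEdge n T T' p q →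
      (AbovePair p ∧ AbovePair q) ∨ (BelowPair p ∧ BelowPair q) ∨
      (CrossingPair p ∧ CrossingPair q) ∨
      (AbovePair p ∧ CrossingPair q) ∨ (AbovePair p ∧ BelowPair q) ∨
      (CrossingPair p ∧ BelowPair q)) :
    ¬ HasDicycleIn (ConflictEdge n T T') S := by
  have key : ∀ p ∈ S, ∀ q ∈ S, ConflictEdge n T T' p q →
      potential n p < potential n q := by
    intro p hp q hq h
    have hpn : p.1 + 2 ≤ n := (hS hp).1
    rcases hedge p hp q hq h with ⟨h1, h2⟩ | ⟨h1, h2⟩ | ⟨h1, h2⟩ | ⟨h1, h2⟩ | ⟨h1, h2⟩ | ⟨h1, h2⟩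
    · rw [potential_above h1, potential_above h2]
      exact above_lt hT h1 h2 h
    · rw [potential_below h1, potential_below h2]
      have := below_lt hT' h1 h2 h
      omega
    · rw [potential_crossing h1, potential_crossing h2]
      have := crossing_lt h1 h2 h
      omega
    · rw [potential_above h1, potential_crossing h2]
      omega
    · rw [potential_above h1, potential_below h2]
      omega
    · rw [potential_crossing h1, potential_below h2]
      omega
  rintro ⟨k, f, hk, hfS, hfE, hcl⟩
  have step : ∀ i, i < k → potential n (f i) < potential n (f (i + 1)) := fun i hi =>
    key _ (hfS i hi.le) _ (hfS (i + 1) hi) (hfE i hi)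
  have mono : ∀ i, i < k → potential n (f 0) < potential n (f (i + 1)) := by
    intro i
    induction i with
    | zero => exact step 0
    | succ i ih => exact fun hi => (ih (by omega)).trans (step (i + 1) hi)
  have := mono (k - 1) (by omega)
  rw [Nat.sub_add_cancel hk, hcl] at this
  exact lt_irrefl _ this
end

section
/- Let T and T' be triangulations of the same convex n-gon given in a linear representation with triangle-pair set Γ, let β ≥ 1, and consider the β-blow-up (βT, βT'). For any two distinct pairs (Δ_i,Δ'_i) ≠ (Δ_j,Δ'_j) in Γ: if some edge of the fan Λ(Δ_i) crosses some edge of the fan Λ(Δ'_j), then every edge of Λ(Δ_i) crosses every edge of Λ(Δ'_j). -/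
/-- Crossing as a condition on arbitrarily ordered endpoints: exactly one of `z`, `w` lies strictly
between `x` and `y`, and the other one lies strictly outside. -/
theorem crosses_pair_iff (x y z w : ℕ) :
    Crosses {x, y} {z, w} ↔
      (x < z ∧ z < y ∧ y < w) ∨ (z < x ∧ x < w ∧ w < y) ∨
      (y < z ∧ z < x ∧ x < w) ∨ (z < y ∧ y < w ∧ w < x) ∨
      (x < w ∧ w < y ∧ y < z) ∨ (w < x ∧ x < z ∧ z < y) ∨
      (y < w ∧ w < x ∧ x < z) ∨ (w < y ∧ y < z ∧ z < x) := by
  constructor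
  · rintro ⟨a, b, c, d, hab, hcd, h1, h2, h⟩
    rw [← Finset.coe_inj] at h1 h2
    simp only [Finset.coe_pair, Set.pair_eq_pair_iff] at h1 h2
    rcases h1 with ⟨rfl, rfl⟩ | ⟨rfl, rfl⟩ <;> rcases h2 with ⟨rfl, rfl⟩ | ⟨rfl, rfl⟩ <;> omega
  · rintro (h | h | h | h | h | h | h | h)
    · exact ⟨x, y, z, w, by omega, by omega, rfl, rfl, by omega⟩
    · exact ⟨x, y, z, w, by omega, by omega, rfl, rfl, by omega⟩
    · exact ⟨y, x, z, w, by omega, by omega, Finset.pair_comm _ _, rfl, by omega⟩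
    · exact ⟨y, x, z, w, by omega, by omega, Finset.pair_comm _ _, rfl, by omega⟩
    · exact ⟨x, y, w, z, by omega, by omega, rfl, Finset.pair_comm _ _, by omega⟩
    · exact ⟨x, y, w, z, by omega, by omega, rfl, Finset.pair_comm _ _, by omega⟩
    · exact ⟨y, x, w, z, by omega, by omega, Finset.pair_comm _ _, Finset.pair_comm _ _, by omega⟩
    · exact ⟨y, x, w, z, by omega, by omega, Finset.pair_comm _ _, Finset.pair_comm _ _, by omega⟩

/-- A spine edge lies in at most one triangle of a triangulation. -/
theorem apex_unique {T : Set (Finset ℕ)} (hT : ∀ e ∈ T, ∀ f ∈ T, ¬ Crosses e f) {a u v : ℕ}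
    (hu : IsTriangle T a (a + 1) u) (hv : IsTriangle T a (a + 1) v) : u = v := by
  by_contra huv
  wlog h : u < v generalizing u v
  · exact this hv hu (Ne.symm huv) (by omega)
  obtain ⟨-, hu1, hu2, -, hu3, hu4⟩ := hu
  obtain ⟨-, hv1, hv2, -, hv3, hv4⟩ := hv
  rcases Nat.lt_or_gt_of_ne hu2 with hau | hua
  · exact hT _ hu4 _ hv3
      ⟨a, u, a + 1, v, by omega, by omega, rfl, rfl, Or.inl ⟨by omega, by omega, h⟩⟩
  rcases Nat.lt_or_gt_of_ne hv2 with hav | hva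
  · exact hT _ hu3 _ hv4
      ⟨u, a + 1, a, v, by omega, hav, Finset.pair_comm _ _, rfl,
        Or.inl ⟨hua, by omega, by omega⟩⟩
  · exact hT _ hu4 _ hv3
      ⟨u, a, v, a + 1, hua, by omega, Finset.pair_comm _ _, Finset.pair_comm _ _,
        Or.inl ⟨h, hva, by omega⟩⟩

theorem leftSet_finite (n : ℕ) (T T' : Set (Finset ℕ)) : (leftSet n T T').Finite := by
  refine (Set.finite_lt_nat n).subset ?_
  rintro a ⟨u, u', h⟩
  have : a + 2 ≤ n := h.1
  show a < n
  omega

theorem emb_mono (n : ℕ) (T T' : Set (Finset ℕ)) (β : ℕ) : Monotone (emb n T T' β) := by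
  intro i j hij
  refine Nat.add_le_add hij (Nat.mul_le_mul_left _ (Set.ncard_le_ncard ?_ ?_))
  · exact fun a ha => ⟨ha.1, ha.2.trans_le hij⟩
  · exact (leftSet_finite n T T').subset fun a ha => ha.1

/-- All `β` subdivision vertices of the spine edge `{a, a + 1}` precede the image of `a + 1`. -/
theorem emb_add_lt_emb_succ {n : ℕ} {T T' : Set (Finset ℕ)} (β : ℕ) {a : ℕ}
    (ha : a ∈ leftSet n T T') : emb n T T' β a + β < emb n T T' β (a + 1) := by
  have hfin : ({b ∈ leftSet n T T' | b < a}).Finite :=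
    (leftSet_finite n T T').subset fun b hb => hb.1
  have hins : {b ∈ leftSet n T T' | b < a + 1} = insert a {b ∈ leftSet n T T' | b < a} := by
    ext b
    simp only [Set.mem_ofPred_eq, Set.mem_insert_iff]
    constructor
    · rintro ⟨hb, hlt⟩
      rcases Nat.lt_succ_iff_lt_or_eq.mp hlt with h | h
      · exact Or.inr ⟨hb, h⟩
      · exact Or.inl h
    · rintro (rfl | ⟨hb, hlt⟩)
      · exact ⟨ha, Nat.lt_succ_self _⟩
      · exact ⟨hb, hlt.trans (Nat.lt_succ_self _)⟩
  have hcard : ({b ∈ leftSet n T T' | b < a + 1}).ncard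
      = ({b ∈ leftSet n T T' | b < a}).ncard + 1 := by
    rw [hins, Set.ncard_insert_of_notMem (fun h => lt_irrefl _ h.2) hfin]
  unfold emb
  rw [hcard, Nat.mul_add]
  omega

/-- No image of an original vertex is a subdivision vertex of the spine edge `{a, a + 1}`. -/
theorem emb_le_or_lt {n : ℕ} {T T' : Set (Finset ℕ)} (β : ℕ) {a : ℕ}
    (ha : a ∈ leftSet n T T') (m : ℕ) :
    emb n T T' β m ≤ emb n T T' β a ∨ emb n T T' β a + β < emb n T T' β m := by
  rcases Nat.lt_or_ge a m with h | h
  · exact Or.inr ((emb_add_lt_emb_succ β ha).trans_le (emb_mono n T T' β h))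
  · exact Or.inl (emb_mono n T T' β h)

/-- For distinct triangle pairs `p ≠ q` in `Γ`: if some edge of
the fan `Λ(Δ_p)` crosses some edge of the fan `Λ(Δ'_q)` in the β-blow-up, then
every edge of `Λ(Δ_p)` crosses every edge of `Λ(Δ'_q)`. -/
theorem fan_crossing_all_of_some
    (n : ℕ) (hn : 3 ≤ n) (T T' : Set (Finset ℕ))
    (hT : IsTriangulation n T) (hT' : IsTriangulation n T')
    (β : ℕ) (hβ : 1 ≤ β)
    (p q : ℕ × ℕ × ℕ) (hp : p ∈ Gamma n T T') (hq : q ∈ Gamma n T T') (hpq : p ≠ q)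
    (hsome : ∃ E ∈ fanT n T T' β p, ∃ E' ∈ fanT' n T T' β q, Crosses E E') :
    ∀ E ∈ fanT n T T' β p, ∀ E' ∈ fanT' n T T' β q, Crosses E E' := by
  have hpl : p.1 ∈ leftSet n T T' := ⟨p.2.1, p.2.2, hp⟩
  have hql : q.1 ∈ leftSet n T T' := ⟨q.2.1, q.2.2, hq⟩
  have hne : p.1 ≠ q.1 := by
    obtain ⟨a, u, u'⟩ := p
    obtain ⟨b, v, v'⟩ := q
    rintro (rfl : a = b)
    have h1 : u = v := apex_unique hT.2.2.1 hp.2.2.2.1 hq.2.2.2.1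
    have h2 : u' = v' := apex_unique hT'.2.2.1 hp.2.2.2.2.1 hq.2.2.2.2.1
    exact hpq (by rw [h1, h2])
  obtain ⟨_, ⟨k, hk1, hk2, rfl⟩, _, ⟨l, hl1, hl2, rfl⟩, hc⟩ := hsome
  rintro _ ⟨k', hk1', hk2', rfl⟩ _ ⟨l', hl1', hl2', rfl⟩
  have hvp := emb_le_or_lt β hpl q.2.2
  have huq := emb_le_or_lt β hql p.2.1
  -- The two blocks of subdivision vertices are disjoint intervals.
  have hblocks : emb n T T' β p.1 + β < emb n T T' β q.1 ∨
      emb n T T' β q.1 + β < emb n T T' β p.1 := by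
    rcases Nat.lt_or_gt_of_ne hne with h | h
    · exact Or.inl ((emb_add_lt_emb_succ β hpl).trans_le (emb_mono n T T' β h))
    · exact Or.inr ((emb_add_lt_emb_succ β hql).trans_le (emb_mono n T T' β h))
  rw [crosses_pair_iff] at hc ⊢
  generalize emb n T T' β p.1 = A at *
  generalize emb n T T' β q.1 = B at *
  generalize emb n T T' β p.2.1 = U at *
  generalize emb n T T' β q.2.2 = V at *
  -- The comparisons entering the crossing condition are the same for all subdivision
  -- vertices.
  have e1 : V < A + k ↔ V < A + k' := by omega
  have e2 : A + k < V ↔ A + k' < V := by omega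
  have e3 : U < B + l ↔ U < B + l' := by omega
  have e4 : B + l < U ↔ B + l' < U := by omega
  have e5 : A + k < B + l ↔ A + k' < B + l' := by omega
  have e6 : B + l < A + k ↔ B + l' < A + k' := by omega
  rwa [e1, e2, e3, e4, e5, e6] at hc
end

section
/- For any two triangulations T₁ and T₂ of the same convex n-gon, the flip distance between T₁ and T₂ is at most 2·|T₁ ∖ T₂|, where T₁ ∖ T₂ is the set of diagonals of T₁ that are not contained in T₂. -/
namespace FlipBound

/-! ### Chords and crossings -/

lemma pair_inj {a b c d : ℕ} (hab : a < b) (hcd : c < d)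
    (h : ({a, b} : Finset ℕ) = {c, d}) : a = c ∧ b = d := by
  have ha : a ∈ ({c, d} : Finset ℕ) := h ▸ by simp
  have hb : b ∈ ({c, d} : Finset ℕ) := h ▸ by simp
  simp only [Finset.mem_insert, Finset.mem_singleton] at ha hb
  omega

lemma crosses_pair {a b c d : ℕ} (hab : a < b) (hcd : c < d) :
    Crosses {a, b} {c, d} ↔ (a < c ∧ c < b ∧ b < d) ∨ (c < a ∧ a < d ∧ d < b) := by
  constructor
  · rintro ⟨a', b', c', d', h1, h2, h3, h4, h5⟩
    obtain ⟨rfl, rfl⟩ := pair_inj hab h1 h3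
    obtain ⟨rfl, rfl⟩ := pair_inj hcd h2 h4
    exact h5
  · intro h
    exact ⟨a, b, c, d, hab, hcd, rfl, rfl, h⟩

lemma crosses_symm {e f : Finset ℕ} (h : Crosses e f) : Crosses f e := by
  obtain ⟨a, b, c, d, h1, h2, h3, h4, h5⟩ := h
  exact ⟨c, d, a, b, h2, h1, h4, h3, h5.symm⟩

lemma isChord_pair {n a b : ℕ} (hab : a < b) (hb : b < n) : IsChord n {a, b} := by
  refine ⟨Finset.card_pair hab.ne, ?_⟩
  intro v hv
  simp only [Finset.mem_insert, Finset.mem_singleton] at hv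
  omega

lemma exists_pair {n : ℕ} {e : Finset ℕ} (h : IsChord n e) :
    ∃ a b, a < b ∧ b < n ∧ e = {a, b} := by
  obtain ⟨hc, hv⟩ := h
  obtain ⟨x, y, hxy, rfl⟩ := Finset.card_eq_two.1 hc
  have hx := hv x (by simp)
  have hy := hv y (by simp)
  rcases lt_or_gt_of_ne hxy with h | h
  · exact ⟨x, y, h, hy, rfl⟩
  · exact ⟨y, x, h, hx, Finset.pair_comm x y⟩

lemma lt_of_chord {n a b : ℕ} (h : IsChord n {a, b}) : b < n := h.2 b (by simp)

section Triangulation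

variable {n : ℕ} {T : Set (Finset ℕ)}

lemma noncross (hT : IsTriangulation n T) {a b c d : ℕ} (h1 : ({a, b} : Finset ℕ) ∈ T)
    (h2 : ({c, d} : Finset ℕ) ∈ T) : ¬ (a < c ∧ c < b ∧ b < d) := by
  intro h
  exact hT.2.2.1 _ h1 _ h2 ((crosses_pair (by omega) (by omega)).2 (Or.inl h))

lemma mem_of_noncross (hT : IsTriangulation n T) {a b : ℕ} (hab : a < b) (hb : b < n)
    (h : ∀ p q, p < q → ({p, q} : Finset ℕ) ∈ T →
      ¬ (p < a ∧ a < q ∧ q < b) ∧ ¬ (a < p ∧ p < b ∧ b < q)) : ({a, b} : Finset ℕ) ∈ T := by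
  by_contra hn
  obtain ⟨f, hf, hc⟩ := hT.2.2.2 _ (isChord_pair hab hb) hn
  obtain ⟨p, q, hpq, -, rfl⟩ := exists_pair (hT.1 f hf)
  have := h p q hpq hf
  rw [crosses_pair hab hpq] at hc
  tauto

lemma triangulation_finite (hT : IsTriangulation n T) : T.Finite := by
  refine (Finset.finite_toSet (Finset.range n).powerset).subset ?_
  intro e he
  simp only [Finset.coe_powerset, Set.mem_preimage, Set.mem_powerset_iff]
  intro v hv
  simpa using (hT.1 e he).2 v hv

/-- A chord `{a, b}` of `T` cutting off at least one vertex between `a` and `b` bounds a triangle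
of `T` on that side. -/
lemma exists_apex (hT : IsTriangulation n T) {a b : ℕ} (hab : a + 1 < b)
    (h : ({a, b} : Finset ℕ) ∈ T) :
    ∃ z, a < z ∧ z < b ∧ ({a, z} : Finset ℕ) ∈ T ∧ ({z, b} : Finset ℕ) ∈ T := by
  classical
  have hb := lt_of_chord (hT.1 _ h)
  have hbd : ({a, a + 1} : Finset ℕ) ∈ T := hT.2.1 _ (Or.inl ⟨a, by omega, rfl⟩)
  -- the apex is the last neighbour of `a` before `b`
  have hex : ∃ m z, m + z = b ∧ a < z ∧ z < b ∧ ({a, z} : Finset ℕ) ∈ T :=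
    ⟨b - (a + 1), a + 1, by omega, by omega, hab, hbd⟩
  obtain ⟨z, hm, haz, hzb, hz⟩ := Nat.find_spec hex
  have hmax : ∀ w, z < w → w < b → ({a, w} : Finset ℕ) ∉ T := fun w h1 h2 h3 =>
    Nat.find_min hex (m := b - w) (by omega) ⟨w, by omega, by omega, h2, h3⟩
  refine ⟨z, haz, hzb, hz, mem_of_noncross hT hzb hb ?_⟩
  intro p q hpq hp
  have h1 := noncross hT hz hp
  have h2 := noncross hT hp h
  have h3 := noncross hT h hp
  refine ⟨fun h4 => ?_, fun h4 => by omega⟩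
  obtain rfl : p = a := by omega
  exact hmax q h4.2.1 h4.2.2 hp

/-- Flipping the diagonal `{a, b}` of the quadrilateral `c < a < z < b`. -/
lemma flip_quad (hT : IsTriangulation n T) {a b c z : ℕ} (hca : c < a) (haz : a < z) (hzb : z < b)
    (ab : ({a, b} : Finset ℕ) ∈ T) (ca : ({c, a} : Finset ℕ) ∈ T) (cb : ({c, b} : Finset ℕ) ∈ T)
    (az : ({a, z} : Finset ℕ) ∈ T) (zb : ({z, b} : Finset ℕ) ∈ T) :
    Flip n T (insert {c, z} (T \ {{a, b}})) := by
  have hb := lt_of_chord (hT.1 _ ab)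
  have hcz : ({c, z} : Finset ℕ) ∉ T := fun h => noncross hT h ab (by omega)
  have key : ∀ g ∈ T, g ≠ {a, b} → ¬ Crosses {c, z} g := by
    intro g hg hne hx
    obtain ⟨p, q, hpq, -, rfl⟩ := exists_pair (hT.1 g hg)
    rw [crosses_pair (by omega) hpq] at hx
    have h1 := noncross hT hg cb
    have h2 := noncross hT ca hg
    have h3 := noncross hT cb hg
    have h4 := noncross hT az hg
    have h5 := noncross hT hg zb
    have : p = a ∧ q = b := by omega
    exact hne (by rw [this.1, this.2])
  refine ⟨hT, ⟨?_, ?_, ?_, ?_⟩, _, _, ab, hcz, rfl⟩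
  · rintro e (rfl | he)
    · exact isChord_pair (by omega) (by omega)
    · exact hT.1 e he.1
  · intro e he
    refine Or.inr ⟨hT.2.1 e he, ?_⟩
    rintro rfl
    rcases he with ⟨i, hi, h⟩ | ⟨_, h⟩
    · have := pair_inj (by omega) (by omega) h
      omega
    · have := pair_inj (by omega) (by omega) h
      omega
  · rintro e (rfl | he) f (rfl | hf)
    · rw [crosses_pair (by omega) (by omega)]
      omega
    · exact key f hf.1 hf.2
    · exact fun h => key e he.1 he.2 (crosses_symm h)
    · exact hT.2.2.1 e he.1 f hf.1
  · intro x hx hxT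
    by_cases hxab : x = {a, b}
    · subst hxab
      exact ⟨_, Or.inl rfl, (crosses_pair (by omega) (by omega)).2 (by omega)⟩
    have hxT' : x ∉ T := fun h => hxT (Or.inr ⟨h, hxab⟩)
    by_contra hno
    push Not at hno
    obtain ⟨p, q, hpq, -, rfl⟩ := exists_pair hx
    -- `{p, q}` crosses some chord of `T`, which can only be `{a, b}`; the four sides of the
    -- quadrilateral then force `{p, q} = {c, z}`
    have hside : ∀ s t : ℕ, s < t → ({s, t} : Finset ℕ) ∈ T → (s ≠ a ∨ t ≠ b) →
        ¬ ((p < s ∧ s < q ∧ q < t) ∨ (s < p ∧ p < t ∧ t < q)) := by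
      intro s t hst hs hne
      rw [← crosses_pair hpq hst]
      refine hno _ (Or.inr ⟨hs, fun h => ?_⟩)
      have := pair_inj hst (by omega) h
      omega
    obtain ⟨g, hg, hc⟩ := hT.2.2.2 _ hx hxT'
    obtain ⟨s, t, hst, -, rfl⟩ := exists_pair (hT.1 g hg)
    have hs := hside s t hst hg
    rw [crosses_pair hpq hst] at hc
    have h1 := hside c a hca ca (by omega)
    have h2 := hside c b (by omega) cb (by omega)
    have h3 := hside a z haz az (by omega)
    have h4 := hside z b hzb zb (by omega)
    have : p = c ∧ q = z := by omega
    exact hxT (Or.inl (by rw [this.1, this.2]))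

end Triangulation

/-! ### The canonical triangulation -/

/-- The chords of the `n`-gon that cross no member of `C`. -/
def compat (n : ℕ) (C : Set (Finset ℕ)) : Set (Finset ℕ) :=
  {e | IsChord n e ∧ ∀ f ∈ C, ¬ Crosses e f}

/-- The compatible chords `{a, b}`, `a < b`, crossed by no compatible chord starting to the left of
`a`. For `C` non-crossing and containing the boundary, this is `C` together with, in each cell of
the dissection by `C`, the fan of diagonals at the least vertex of the cell. -/
def fanOf (n : ℕ) (C : Set (Finset ℕ)) : Set (Finset ℕ) :=
  {e | e ∈ compat n C ∧ ∃ a b, a < b ∧ e = {a, b} ∧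
    ∀ c d, ({c, d} : Finset ℕ) ∈ compat n C → ¬ (c < a ∧ a < d ∧ d < b)}

section Fan

variable {n : ℕ} {C T : Set (Finset ℕ)}

/-- If two compatible chords cross, the quadrilateral side joining the outermost endpoints is
compatible: whatever crosses it crosses one of the two chords. -/
lemma compat_outer (hC : ∀ e ∈ C, IsChord n e) {a b c d : ℕ}
    (h1 : ({a, b} : Finset ℕ) ∈ compat n C) (h2 : ({c, d} : Finset ℕ) ∈ compat n C)
    (h : a < c ∧ c < b ∧ b < d) : ({a, d} : Finset ℕ) ∈ compat n C := by
  refine ⟨isChord_pair (by omega) (lt_of_chord h2.1), fun f hf => ?_⟩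
  obtain ⟨p, q, hpq, -, rfl⟩ := exists_pair (hC f hf)
  have h3 := h1.2 _ hf
  have h4 := h2.2 _ hf
  rw [crosses_pair (by omega) hpq] at h3 h4 ⊢
  omega

lemma subset_compat (hT : IsTriangulation n T) (hCT : C ⊆ T) : T ⊆ compat n C :=
  fun e he => ⟨hT.1 e he, fun f hf => hT.2.2.1 e he f (hCT hf)⟩

lemma subset_fanOf (hC : ∀ e ∈ C, IsChord n e) (hT : IsTriangulation n T) (hCT : C ⊆ T) :
    C ⊆ fanOf n C := by
  intro e he
  obtain ⟨a, b, hab, -, rfl⟩ := exists_pair (hC e he)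
  refine ⟨subset_compat hT hCT (hCT he), a, b, hab, rfl, fun c d hcd h => ?_⟩
  exact hcd.2 _ he ((crosses_pair (by omega) hab).2 (Or.inl h))

lemma fanOf_noncross {e f : Finset ℕ} (he : e ∈ fanOf n C) (hf : f ∈ fanOf n C) :
    ¬ Crosses e f := by
  obtain ⟨he', a, b, hab, rfl, h1⟩ := he
  obtain ⟨hf', c, d, hcd, rfl, h2⟩ := hf
  rw [crosses_pair hab hcd]
  rintro (h | h)
  · exact h2 _ _ he' h
  · exact h1 _ _ hf' h

/-- A triangulation contained in `fanOf n C` equals it, by maximality. -/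
lemma eq_fanOf (hT : IsTriangulation n T) (h : T ⊆ fanOf n C) : T = fanOf n C := by
  refine h.antisymm fun e he => ?_
  by_contra hn
  obtain ⟨f, hf, hc⟩ := hT.2.2.2 e he.1.1 hn
  exact fanOf_noncross he (h hf) hc

/-- A triangulation `T ⊇ C` not contained in `fanOf n C` can be flipped so that a chord outside
`fanOf n C` is replaced by one inside. -/
lemma exists_flip (hT : IsTriangulation n T) (hCT : C ⊆ T) (hne : ¬ T ⊆ fanOf n C) :
    ∃ e f, e ∈ T ∧ e ∉ fanOf n C ∧ f ∉ T ∧ f ∈ fanOf n C ∧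
      Flip n T (insert f (T \ {e})) := by
  classical
  have hC : ∀ e ∈ C, IsChord n e := fun e he => hT.1 e (hCT he)
  have hTK := subset_compat hT hCT
  have hex : ∃ c a b d, ({a, b} : Finset ℕ) ∈ T ∧ ({c, d} : Finset ℕ) ∈ compat n C ∧
      (c < a ∧ a < d ∧ d < b) := by
    obtain ⟨e, he, heF⟩ := Set.not_subset.1 hne
    obtain ⟨a, b, hab, -, rfl⟩ := exists_pair (hT.1 e he)
    by_contra hno
    push Not at hno
    exact heF ⟨hTK he, a, b, hab, rfl, fun c d hcd h => by
      have := hno c a b d he hcd h.1 h.2.1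
      omega⟩
  obtain ⟨a₀, b₀, d₀, h₀⟩ := Nat.find_spec hex
  have hmin : ∀ c' < Nat.find hex, ∀ a b d, ({a, b} : Finset ℕ) ∈ T →
      ({c', d} : Finset ℕ) ∈ compat n C → ¬ (c' < a ∧ a < d ∧ d < b) :=
    fun c' hc' a b d h1 h2 h3 => Nat.find_min hex hc' ⟨a, b, d, h1, h2, h3⟩
  generalize Nat.find hex = c at h₀ hmin
  -- among the chords of `T` crossed in this way from `c`, a longest one minimises `n - (b - a)`
  have hex2 : ∃ m a b d, m + (b - a) = n ∧ ({a, b} : Finset ℕ) ∈ T ∧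
      ({c, d} : Finset ℕ) ∈ compat n C ∧ (c < a ∧ a < d ∧ d < b) := by
    have := lt_of_chord (hT.1 _ h₀.1)
    exact ⟨n - (b₀ - a₀), a₀, b₀, d₀, by omega, h₀⟩
  obtain ⟨a, b, d, hm, ab, cd, hca, had, hdb⟩ := Nat.find_spec hex2
  have hlong : ∀ p q, ({p, q} : Finset ℕ) ∈ T → c < p → p < d → d < q → q - p ≤ b - a := by
    intro p q hp h1 h2 h3
    by_contra hlt
    have := lt_of_chord (hT.1 _ hp)
    exact Nat.find_min hex2 (m := n - (q - p)) (by omega)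
      ⟨p, q, d, by omega, hp, cd, h1, h2, h3⟩
  have hb := lt_of_chord (hT.1 _ ab)
  -- no compatible chord starting left of `c` crosses `{c, d}` from the left, since `compat_outer`
  -- would contradict the choice of `c`
  have hleft : ∀ p q, ({p, q} : Finset ℕ) ∈ compat n C → ¬ (p < c ∧ c < q ∧ q < d) := by
    intro p q hp h
    exact hmin p h.1 a b d ab (compat_outer hC hp cd h) (by omega)
  have ca : ({c, a} : Finset ℕ) ∈ T := by
    refine mem_of_noncross hT hca (by omega) fun p q hpq hp => ?_
    have h1 := hleft p q (hTK hp)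
    have h2 := noncross hT hp ab
    have h3 := hlong p q hp
    omega
  have cb : ({c, b} : Finset ℕ) ∈ T := by
    refine mem_of_noncross hT (by omega) hb fun p q hpq hp => ?_
    have h1 := hleft p q (hTK hp)
    have h2 := noncross hT hp ab
    have h3 := noncross hT ab hp
    have h4 := hlong p q hp
    omega
  obtain ⟨z, haz, hzb, az, zb⟩ := exists_apex hT (by omega) ab
  have hflip := flip_quad hT hca haz hzb ab ca cb az zb
  have habC : ({a, b} : Finset ℕ) ∉ C := fun h =>
    cd.2 _ h ((crosses_pair (by omega) (by omega)).2 (by omega))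
  have czK : ({c, z} : Finset ℕ) ∈ compat n C :=
    subset_compat hflip.2.1 (fun e he => Or.inr ⟨hCT he, fun h => habC (h ▸ he)⟩) (Or.inl rfl)
  refine ⟨{a, b}, {c, z}, ab, ?_, fun h => noncross hT h ab (by omega), ?_, hflip⟩
  · rintro ⟨-, a', b', hab', h, h'⟩
    obtain ⟨rfl, rfl⟩ := pair_inj (by omega) hab' h
    exact h' c d cd ⟨hca, had, hdb⟩
  · refine ⟨czK, c, z, by omega, rfl, fun c' d' h h' => ?_⟩
    have h1 := hleft c' d' h
    have h2 := hmin c' h'.1 a b d' ab h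
    omega

end Fan

/-! ### Flip sequences -/

section FlipSeq

variable {n : ℕ} {S T U : Set (Finset ℕ)}

lemma flip_symm (h : Flip n S T) : Flip n T S := by
  obtain ⟨hS, hT, e, f, he, hf, rfl⟩ := h
  have hef : e ≠ f := fun h => hf (h ▸ he)
  refine ⟨hT, hS, f, e, Or.inl rfl, ?_, ?_⟩
  · rintro (h | h)
    · exact hef h
    · exact h.2 rfl
  · rw [Set.insert_sdiff_self_of_notMem (fun h => hf h.1), Set.insert_sdiff_singleton,
      Set.insert_eq_of_mem he]

lemma flip_ncard (h : Flip n S T) : T.ncard = S.ncard := by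
  obtain ⟨hS, -, e, f, he, hf, rfl⟩ := h
  exact Set.ncard_exchange hf he

lemma flipSeq_symm {ℓ : ℕ} (h : ∃ g, IsFlipSeq n S T ℓ g) : ∃ g, IsFlipSeq n T S ℓ g := by
  obtain ⟨g, h0, hl, hg⟩ := h
  refine ⟨fun i => g (ℓ - i), by simpa using hl, by simpa using h0, fun i hi => ?_⟩
  have := flip_symm (hg (ℓ - (i + 1)) (by omega))
  rwa [show ℓ - (i + 1) + 1 = ℓ - i by omega] at this

lemma flipSeq_trans {k ℓ : ℕ} (h : ∃ g, IsFlipSeq n S T k g) (h' : ∃ g, IsFlipSeq n T U ℓ g) :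
    ∃ g, IsFlipSeq n S U (k + ℓ) g := by
  obtain ⟨g, h0, hk, hg⟩ := h
  obtain ⟨g', h0', hl, hg'⟩ := h'
  refine ⟨fun i => if i < k then g i else g' (i - k), ?_, by simpa using hl, fun i hi => ?_⟩
  · rcases Nat.eq_zero_or_pos k with rfl | hpos
    · simpa [h0'] using hk.symm.trans h0
    · simpa [hpos] using h0
  · rcases lt_trichotomy (i + 1) k with h | h | h
    · simpa [h, show i < k by omega] using hg i (by omega)
    · subst h
      simpa [h0', hk] using hg i (by omega)
    · simpa [show ¬ i < k by omega, show ¬ i + 1 < k by omega, show i + 1 - k = i - k + 1 by omega]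
        using hg' (i - k) (by omega)

lemma flipSeq_ncard {ℓ : ℕ} (h : ∃ g, IsFlipSeq n S T ℓ g) : T.ncard = S.ncard := by
  obtain ⟨g, h0, hl, hg⟩ := h
  have : ∀ i ≤ ℓ, (g i).ncard = S.ncard := by
    intro i
    induction i with
    | zero => intro _; rw [h0]
    | succ i ih => intro hi; rw [flip_ncard (hg i hi), ih (by omega)]
  rw [← hl, this ℓ le_rfl]

/-- Every triangulation `T ⊇ C` reaches `fanOf n C` by flipping each chord outside it once. -/
lemma exists_flipSeq_fanOf {C : Set (Finset ℕ)} (hT : IsTriangulation n T) (hCT : C ⊆ T) :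
    ∃ g, IsFlipSeq n T (fanOf n C) (T \ fanOf n C).ncard g := by
  induction hk : (T \ fanOf n C).ncard generalizing T with
  | zero =>
    rw [Set.ncard_eq_zero (triangulation_finite hT).sdiff, Set.sdiff_eq_empty] at hk
    exact ⟨fun _ => T, rfl, eq_fanOf hT hk, fun i hi => absurd hi (Nat.not_lt_zero i)⟩
  | succ k ih =>
    have hne : ¬ T ⊆ fanOf n C := by
      rw [← Set.sdiff_eq_empty]
      intro h
      simp [h] at hk
    obtain ⟨e, f, he, heF, hf, hfF, hflip⟩ := exists_flip hT hCT hne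
    have hCF := subset_fanOf (fun e he => hT.1 e (hCT he)) hT hCT
    have hdiff : (insert f (T \ {e})) \ fanOf n C = (T \ fanOf n C) \ {e} := by
      ext x
      simp only [Set.mem_sdiff, Set.mem_insert_iff, Set.mem_singleton_iff]
      constructor
      · rintro ⟨rfl | h, h'⟩
        · exact absurd hfF h'
        · exact ⟨⟨h.1, h'⟩, h.2⟩
      · rintro ⟨⟨h1, h2⟩, h3⟩
        exact ⟨Or.inr ⟨h1, h3⟩, h2⟩
    have hrest := ih hflip.2.1
      (fun x hx => Or.inr ⟨hCT hx, fun h => heF (h ▸ hCF hx)⟩)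
      (by rw [hdiff, Set.ncard_sdiff_singleton_of_mem (Set.mem_sdiff_of_mem he heF), hk]; rfl)
    rw [Nat.add_comm]
    refine flipSeq_trans ⟨fun i => if i = 0 then T else _, rfl, rfl, fun i hi => ?_⟩ hrest
    obtain rfl : i = 0 := by omega
    exact hflip

end FlipSeq

end FlipBound

/-- For any two triangulations `T₁`, `T₂` of the same convex
`n`-gon, the flip distance between `T₁` and `T₂` is at most `2·|T₁ ∖ T₂|`, where
`T₁ ∖ T₂` is the set of diagonals of `T₁` not contained in `T₂`. -/
theorem flip_distance_le_twice_symm_diff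
    (n : ℕ) (hn : 3 ≤ n) (T₁ T₂ : Set (Finset ℕ))
    (h₁ : IsTriangulation n T₁) (h₂ : IsTriangulation n T₂) :
    flipDist n T₁ T₂ ≤ 2 * ({e ∈ T₁ | ¬ BoundaryEdge n e ∧ e ∉ T₂}).ncard := by
  have hfin₁ := FlipBound.triangulation_finite h₁
  have hfin₂ := FlipBound.triangulation_finite h₂
  have hset : {e ∈ T₁ | ¬ BoundaryEdge n e ∧ e ∉ T₂} = T₁ \ T₂ := by
    ext e
    exact ⟨fun h => ⟨h.1, h.2.2⟩, fun h => ⟨h.1, fun hb => h.2 (h₂.2.1 e hb), h.2⟩⟩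
  rw [hset]
  have s₁ := FlipBound.exists_flipSeq_fanOf h₁ (Set.inter_subset_left (t := T₂))
  have s₂ := FlipBound.exists_flipSeq_fanOf h₂ (Set.inter_subset_right (s := T₁))
  have hC := FlipBound.subset_fanOf (fun e he => h₁.1 e he.1) h₁ (Set.inter_subset_left (t := T₂))
  set F := FlipBound.fanOf n (T₁ ∩ T₂)
  have hcard : T₁.ncard = T₂.ncard :=
    (FlipBound.flipSeq_ncard s₁).symm.trans (FlipBound.flipSeq_ncard s₂)
  have hsymm : (T₂ \ T₁).ncard = (T₁ \ T₂).ncard :=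
    ((Set.ncard_eq_ncard_iff_ncard_sdiff_eq_ncard_sdiff hfin₁ hfin₂).1 hcard).symm
  have b₁ : (T₁ \ F).ncard ≤ (T₁ \ T₂).ncard :=
    Set.ncard_le_ncard (fun e he => ⟨he.1, fun h => he.2 (hC ⟨he.1, h⟩)⟩) hfin₁.sdiff
  have b₂ : (T₂ \ F).ncard ≤ (T₂ \ T₁).ncard :=
    Set.ncard_le_ncard (fun e he => ⟨he.1, fun h => he.2 (hC ⟨h, he.1⟩)⟩) hfin₂.sdiff
  have hdist : flipDist n T₁ T₂ ≤ (T₁ \ F).ncard + (T₂ \ F).ncard :=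
    Nat.sInf_le (FlipBound.flipSeq_trans s₁ (FlipBound.flipSeq_symm s₂))
  omega
end

section
/- Let n ≥ 3 and let u and v be two adjacent vertices of a convex n-gon (i.e., {u,v} is a boundary edge). Then the flip distance between the fan triangulation at u and the fan triangulation at v equals n − 3. -/
/-- The fan triangulation of the convex `n`-gon at the vertex `w`: all boundary
edges together with exactly the diagonals incident to `w`. -/
def fanTri (n w : ℕ) : Set (Finset ℕ) :=
  {e | BoundaryEdge n e} ∪
  {e | ∃ x : ℕ, x < n ∧ x ≠ w ∧ ¬ BoundaryEdge n ({w, x} : Finset ℕ) ∧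
    e = ({w, x} : Finset ℕ)}

/-! ### Chords in cyclic coordinates -/

theorem finset_pair_eq {a b c d : ℕ} :
    ({a, b} : Finset ℕ) = {c, d} ↔ (a = c ∧ b = d) ∨ (a = d ∧ b = c) := by
  rw [← Finset.coe_inj]
  push_cast
  exact Set.pair_eq_pair_iff

/-- The vertex at position `p` of the `n`-gon, counted cyclically from `u`; this is
`(u + p) mod n` when `u, p < n`. -/
def vtx (n u p : ℕ) : ℕ := if u + p < n then u + p else u + p - n

/-- The chord joining the vertices at positions `p` and `q`, counted cyclically from `u`. -/
def chd (n u p q : ℕ) : Finset ℕ := {vtx n u p, vtx n u q}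

theorem vtx_lt {n u p : ℕ} (hu : u < n) (hp : p < n) : vtx n u p < n := by
  unfold vtx; split_ifs <;> omega

theorem vtx_inj {n u p q : ℕ} (hp : p < n) (hq : q < n)
    (h : vtx n u p = vtx n u q) : p = q := by
  unfold vtx at h; split_ifs at h <;> omega

theorem exists_vtx {n u x : ℕ} (hu : u < n) (hx : x < n) : ∃ p < n, vtx n u p = x := by
  by_cases h : u ≤ x
  · exact ⟨x - u, by omega, by unfold vtx; split_ifs <;> omega⟩
  · exact ⟨x + n - u, by omega, by unfold vtx; split_ifs <;> omega⟩

theorem chd_inj {n u p q p' q' : ℕ} (hpq : p < q) (hq : q < n)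
    (hpq' : p' < q') (hq' : q' < n) : chd n u p q = chd n u p' q' ↔ p = p' ∧ q = q' := by
  constructor
  · intro h
    rcases finset_pair_eq.1 h with ⟨h1, h2⟩ | ⟨h1, h2⟩
    · exact ⟨vtx_inj (by omega) (by omega) h1, vtx_inj (by omega) (by omega) h2⟩
    · have := vtx_inj (by omega) (by omega) h1
      have := vtx_inj (by omega) (by omega) h2
      omega
  · rintro ⟨rfl, rfl⟩; rfl

theorem isChord_chd {n u p q : ℕ} (hu : u < n) (hpq : p < q) (hq : q < n) :
    IsChord n (chd n u p q) := by
  refine ⟨Finset.card_pair fun h => ?_, ?_⟩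
  · have := vtx_inj (by omega) hq h
    omega
  · intro x hx
    rcases Finset.mem_insert.1 hx with rfl | hx
    · exact vtx_lt hu (by omega)
    · rw [Finset.mem_singleton.1 hx]; exact vtx_lt hu hq

theorem exists_chd_pair {n u a b : ℕ} (hu : u < n) (ha : a < n) (hb : b < n) (hab : a ≠ b) :
    ∃ p q, p < q ∧ q < n ∧ ({a, b} : Finset ℕ) = chd n u p q := by
  obtain ⟨p, hp, rfl⟩ := exists_vtx hu ha
  obtain ⟨q, hq, rfl⟩ := exists_vtx hu hb
  rcases lt_trichotomy p q with h | h | h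
  · exact ⟨p, q, h, hq, rfl⟩
  · exact absurd (by rw [h]) hab
  · exact ⟨q, p, h, hp, Finset.pair_comm _ _⟩

theorem exists_chd {n u : ℕ} {e : Finset ℕ} (hu : u < n) (he : IsChord n e) :
    ∃ p q, p < q ∧ q < n ∧ e = chd n u p q := by
  obtain ⟨hc, hv⟩ := he
  obtain ⟨a, b, hab, rfl⟩ := Finset.card_eq_two.1 hc
  exact exists_chd_pair hu (hv a (by simp)) (hv b (by simp)) hab

theorem crosses_pair {a b c d : ℕ} :
    Crosses {a, b} {c, d} ↔
      (min a b < min c d ∧ min c d < max a b ∧ max a b < max c d) ∨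
      (min c d < min a b ∧ min a b < max c d ∧ max c d < max a b) := by
  constructor
  · rintro ⟨a', b', c', d', h1, h2, h3, h4, h5⟩
    rw [finset_pair_eq] at h3 h4
    omega
  · intro h
    refine ⟨min a b, max a b, min c d, max c d, by omega, by omega, ?_, ?_, h⟩ <;>
    · rw [finset_pair_eq]; omega

/-- Crossing is invariant under rotation of the polygon. -/
theorem crosses_chd {n u p q p' q' : ℕ} (hpq : p < q) (hq : q < n)
    (hpq' : p' < q') (hq' : q' < n) :
    Crosses (chd n u p q) (chd n u p' q') ↔
      (p < p' ∧ p' < q ∧ q < q') ∨ (p' < p ∧ p < q' ∧ q' < q) := by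
  unfold chd
  rw [crosses_pair]
  unfold vtx
  split_ifs <;> omega

theorem boundary_pair {n a b : ℕ} (hn : 3 ≤ n) :
    BoundaryEdge n {a, b} ↔ (a + 2 ≤ n ∧ b = a + 1) ∨ (b + 2 ≤ n ∧ a = b + 1) ∨
      (a = 0 ∧ b = n - 1) ∨ (a = n - 1 ∧ b = 0) := by
  unfold BoundaryEdge
  simp only [finset_pair_eq]
  constructor
  · rintro (⟨i, h⟩ | h) <;> omega
  · rintro (h | h | h)
    · exact Or.inl ⟨a, by omega⟩
    · exact Or.inl ⟨b, by omega⟩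
    · exact Or.inr (by omega)

/-- The boundary is invariant under rotation of the polygon. -/
theorem boundary_chd {n u p q : ℕ} (hn : 3 ≤ n) (hu : u < n) (hpq : p < q) (hq : q < n) :
    BoundaryEdge n (chd n u p q) ↔ q = p + 1 ∨ (p = 0 ∧ q = n - 1) := by
  unfold chd
  rw [boundary_pair hn]
  unfold vtx
  split_ifs <;> omega

theorem BoundaryEdge.isChord {n : ℕ} {e : Finset ℕ} (hn : 3 ≤ n) (he : BoundaryEdge n e) :
    IsChord n e := by
  rcases he with ⟨i, hi, rfl⟩ | ⟨-, rfl⟩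
  · refine ⟨Finset.card_pair (by omega), ?_⟩
    simp only [Finset.mem_insert, Finset.mem_singleton]
    omega
  · refine ⟨Finset.card_pair (by omega), ?_⟩
    simp only [Finset.mem_insert, Finset.mem_singleton]
    omega

/-! ### The interpolating triangulations -/

/-- The triangulation interpolating between the fans at `u` and at its cyclic predecessor:
in positions counted from `u`, the boundary edges, the chords from `0` to the positions `≤ m`,
and the chords from `n - 1` to the positions `≥ m`. -/
def zigTri (n u m : ℕ) : Set (Finset ℕ) :=
  {e | ∃ p q, p < q ∧ q < n ∧ e = chd n u p q ∧
    (q = p + 1 ∨ (p = 0 ∧ q = n - 1) ∨ (p = 0 ∧ q ≤ m) ∨ (q = n - 1 ∧ m ≤ p))}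

theorem chd_mem_zigTri {n u m p q : ℕ} (hpq : p < q) (hq : q < n) :
    chd n u p q ∈ zigTri n u m ↔
      (q = p + 1 ∨ (p = 0 ∧ q = n - 1) ∨ (p = 0 ∧ q ≤ m) ∨ (q = n - 1 ∧ m ≤ p)) := by
  constructor
  · rintro ⟨p', q', h1, h2, h3, h4⟩
    obtain ⟨rfl, rfl⟩ := (chd_inj hpq hq h1 h2).1 h3
    exact h4
  · intro h
    exact ⟨p, q, hpq, hq, rfl, h⟩

theorem isTriangulation_zigTri {n u m : ℕ} (hn : 3 ≤ n) (hu : u < n) (hm : 1 ≤ m)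
    (hm' : m + 2 ≤ n) : IsTriangulation n (zigTri n u m) := by
  refine ⟨?_, ?_, ?_, ?_⟩
  · rintro _ ⟨p, q, hpq, hq, rfl, -⟩
    exact isChord_chd hu hpq hq
  · intro e he
    obtain ⟨p, q, hpq, hq, rfl⟩ := exists_chd hu (he.isChord hn)
    rw [boundary_chd hn hu hpq hq] at he
    rw [chd_mem_zigTri hpq hq]
    omega
  · rintro _ ⟨p, q, hpq, hq, rfl, h⟩ _ ⟨p', q', hpq', hq', rfl, h'⟩
    rw [crosses_chd hpq hq hpq' hq']
    omega
  · intro e he hne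
    obtain ⟨p, q, hpq, hq, rfl⟩ := exists_chd hu he
    rw [chd_mem_zigTri hpq hq] at hne
    -- A missing chord at position `0` is crossed by `{m, n - 1}`; any other missing chord
    -- `{p, q}` separates `p + 1` from both `0` and `n - 1` (or from `0` alone, if `q = n - 1`, and
    -- then `p < m`). One of `{0, p + 1}`, `{p + 1, n - 1}` is present, according to `p < m` or not.
    have key : ∀ p' q', p' < q' → q' < n →
        (q' = p' + 1 ∨ (p' = 0 ∧ q' = n - 1) ∨ (p' = 0 ∧ q' ≤ m) ∨ (q' = n - 1 ∧ m ≤ p')) →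
        ((p < p' ∧ p' < q ∧ q < q') ∨ (p' < p ∧ p < q' ∧ q' < q)) →
        ∃ f ∈ zigTri n u m, Crosses (chd n u p q) f := fun p' q' h1 h2 h3 h4 =>
      ⟨chd n u p' q', (chd_mem_zigTri h1 h2).2 h3, (crosses_chd hpq hq h1 h2).2 h4⟩
    by_cases h0 : p = 0
    · exact key m (n - 1) (by omega) (by omega) (by omega) (by omega)
    · by_cases h1 : p < m
      · exact key 0 (p + 1) (by omega) (by omega) (by omega) (by omega)
      · exact key (p + 1) (n - 1) (by omega) (by omega) (by omega) (by omega)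

theorem flip_zigTri {n u m : ℕ} (hn : 3 ≤ n) (hu : u < n) (hm : 1 ≤ m) (hm' : m + 3 ≤ n) :
    Flip n (zigTri n u (m + 1)) (zigTri n u m) := by
  refine ⟨isTriangulation_zigTri hn hu (by omega) (by omega),
    isTriangulation_zigTri hn hu hm (by omega), chd n u 0 (m + 1), chd n u m (n - 1), ?_, ?_, ?_⟩
  · rw [chd_mem_zigTri (by omega) (by omega)]; omega
  · rw [chd_mem_zigTri (by omega) (by omega)]; omega
  · have key : ∀ p q, p < q → q < n → (chd n u p q ∈ zigTri n u m ↔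
        chd n u p q ∈ insert (chd n u m (n - 1)) (zigTri n u (m + 1) \ {chd n u 0 (m + 1)})) := by
      intro p q hpq hq
      rw [Set.mem_insert_iff, Set.mem_sdiff, Set.mem_singleton_iff, chd_mem_zigTri hpq hq,
        chd_mem_zigTri hpq hq, chd_inj hpq hq (by omega) (by omega),
        chd_inj hpq hq (by omega) (by omega)]
      omega
    ext e
    constructor
    · intro he
      obtain ⟨p, q, hpq, hq, rfl, -⟩ := id he
      exact (key p q hpq hq).1 he
    · intro he
      have : ∃ p q, p < q ∧ q < n ∧ e = chd n u p q := by
        rcases he with rfl | ⟨⟨p, q, hpq, hq, rfl, -⟩, -⟩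
        · exact ⟨m, n - 1, by omega, by omega, rfl⟩
        · exact ⟨p, q, hpq, hq, rfl⟩
      obtain ⟨p, q, hpq, hq, rfl⟩ := this
      exact (key p q hpq hq).2 he

/-! ### Fans in cyclic coordinates -/

theorem vtx_zero {n u : ℕ} (hu : u < n) : vtx n u 0 = u := by simp [vtx, hu]

/-- A chord belongs to the fan at the vertex in position `r` iff it is a boundary edge or one of
its ends is in position `r`. -/
theorem chd_mem_fanTri {n u r p q : ℕ} (hn : 3 ≤ n) (hu : u < n) (hr : r < n) (hpq : p < q)
    (hq : q < n) :
    chd n u p q ∈ fanTri n (vtx n u r) ↔ q = p + 1 ∨ (p = 0 ∧ q = n - 1) ∨ p = r ∨ q = r := by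
  constructor
  · rintro (h | ⟨x, hx, hxr, -, h⟩)
    · have := (boundary_chd hn hu hpq hq).1 h
      omega
    · rcases finset_pair_eq.1 h with ⟨h, -⟩ | ⟨-, h⟩
      · have := vtx_inj (by omega) hr h
        omega
      · have := vtx_inj (by omega) hr h
        omega
  · intro h
    by_cases hb : BoundaryEdge n (chd n u p q)
    · exact Or.inl hb
    · have hb' := hb
      rw [boundary_chd hn hu hpq hq] at hb'
      rcases (by omega : p = r ∨ q = r) with rfl | rfl
      · refine Or.inr ⟨vtx n u q, vtx_lt hu hq, fun h => ?_, hb, rfl⟩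
        have := vtx_inj hq hr h
        omega
      · refine Or.inr ⟨vtx n u p, vtx_lt hu (by omega), fun h => ?_, ?_, Finset.pair_comm _ _⟩
        · have := vtx_inj (by omega) hr h
          omega
        · rw [Finset.pair_comm]; exact hb

theorem isChord_of_mem_fanTri {n w : ℕ} {e : Finset ℕ} (hn : 3 ≤ n) (hw : w < n)
    (he : e ∈ fanTri n w) : IsChord n e := by
  rcases he with h | ⟨x, hx, hxw, -, rfl⟩
  · exact BoundaryEdge.isChord hn h
  · refine ⟨Finset.card_pair hxw.symm, ?_⟩
    simp only [Finset.mem_insert, Finset.mem_singleton]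
    omega

theorem fanTri_eq_zigTri {n u r m : ℕ} (hn : 3 ≤ n) (hu : u < n)
    (h : (r = 0 ∧ m = n - 2) ∨ (r = n - 1 ∧ m = 1)) : fanTri n (vtx n u r) = zigTri n u m := by
  have key : ∀ p q, p < q → q < n →
      (chd n u p q ∈ fanTri n (vtx n u r) ↔ chd n u p q ∈ zigTri n u m) := by
    intro p q hpq hq
    rw [chd_mem_fanTri hn hu (by omega) hpq hq, chd_mem_zigTri hpq hq]
    omega
  ext e
  constructor
  · intro he
    obtain ⟨p, q, hpq, hq, rfl⟩ :=
      exists_chd hu (isChord_of_mem_fanTri hn (vtx_lt hu (by omega)) he)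
    exact (key p q hpq hq).1 he
  · intro he
    obtain ⟨p, q, hpq, hq, rfl, -⟩ := id he
    exact (key p q hpq hq).2 he

/-! ### The flip distance -/

/-- After `ℓ` flips at most `ℓ` new chords are present. -/
theorem IsFlipSeq.exists_new {n ℓ : ℕ} {T T' : Set (Finset ℕ)} {g : ℕ → Set (Finset ℕ)}
    (h : IsFlipSeq n T T' ℓ g) : ∃ F : Finset (Finset ℕ), F.card ≤ ℓ ∧ T' ⊆ T ∪ F := by
  obtain ⟨rfl, rfl, hs⟩ := h
  have : ∀ i ≤ ℓ, ∃ F : Finset (Finset ℕ), F.card ≤ i ∧ g i ⊆ g 0 ∪ F := by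
    intro i
    induction i with
    | zero => exact fun _ => ⟨∅, by simp, by simp⟩
    | succ i ih =>
      intro hi
      obtain ⟨F, hF, hsub⟩ := ih (by omega)
      obtain ⟨-, -, e, f, -, -, heq⟩ := hs i (by omega)
      refine ⟨insert f F, (Finset.card_insert_le _ _).trans (by omega), ?_⟩
      rw [heq]
      rintro x (rfl | ⟨hx, -⟩)
      · simp
      · rcases hsub hx with hx | hx
        · exact Or.inl hx
        · exact Or.inr (by simpa using Or.inr hx)
  exact this ℓ le_rfl

theorem isFlipSeq_zigTri {n u : ℕ} (hn : 3 ≤ n) (hu : u < n) :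
    IsFlipSeq n (zigTri n u (n - 2)) (zigTri n u 1) (n - 3)
      (fun i => zigTri n u (n - 2 - i)) := by
  refine ⟨rfl, ?_, fun i hi => ?_⟩
  · show zigTri n u (n - 2 - (n - 3)) = _
    rw [show n - 2 - (n - 3) = 1 by omega]
  · show Flip n (zigTri n u (n - 2 - i)) (zigTri n u (n - 2 - (i + 1)))
    rw [show n - 2 - i = (n - 2 - (i + 1)) + 1 by omega]
    exact flip_zigTri hn hu (by omega) (by omega)

theorem flipDist_zigTri {n u : ℕ} (hn : 3 ≤ n) (hu : u < n) :
    flipDist n (zigTri n u (n - 2)) (zigTri n u 1) = n - 3 := by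
  unfold flipDist
  apply le_antisymm
  · exact Nat.sInf_le ⟨_, isFlipSeq_zigTri hn hu⟩
  ·
    -- Nonemptiness matters here, since `sInf ∅ = 0`.
    have hne : {ℓ : ℕ | ∃ g, IsFlipSeq n (zigTri n u (n - 2)) (zigTri n u 1) ℓ g}.Nonempty :=
      ⟨_, _, isFlipSeq_zigTri hn hu⟩
    obtain ⟨g, hg⟩ := Nat.sInf_mem hne
    obtain ⟨F, hF, hsub⟩ := hg.exists_new
    refine le_trans ?_ hF
    -- The chords from position `n - 1` to the positions `1, …, n - 3` are all new.
    have hD : (Finset.Icc 1 (n - 3)).card ≤ F.card := by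
      apply Finset.card_le_card_of_injOn (fun p => chd n u p (n - 1))
      · intro p hp
        rw [Finset.mem_coe, Finset.mem_Icc] at hp
        have h1 : chd n u p (n - 1) ∈ zigTri n u 1 := by
          rw [chd_mem_zigTri (by omega) (by omega)]; omega
        rcases hsub h1 with h | h
        · rw [chd_mem_zigTri (by omega) (by omega)] at h
          omega
        · exact h
      · intro p hp p' hp' h
        rw [Finset.mem_coe, Finset.mem_Icc] at hp hp'
        exact ((chd_inj (by omega) (by omega) (by omega) (by omega)).1 h).1
    simpa using hD

/-! ### Symmetry and the general case -/

theorem Flip.symm {n : ℕ} {T T' : Set (Finset ℕ)} (h : Flip n T T') : Flip n T' T := by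
  obtain ⟨h1, h2, e, f, he, hf, rfl⟩ := h
  have hef : e ≠ f := fun h => hf (h ▸ he)
  refine ⟨h2, h1, f, e, Or.inl rfl, ?_, ?_⟩
  · rintro (h | ⟨-, h⟩)
    · exact hef h
    · exact h rfl
  · ext x
    simp only [Set.mem_insert_iff, Set.mem_sdiff, Set.mem_singleton_iff]
    by_cases hxe : x = e
    · subst hxe; simp [he]
    · by_cases hxf : x = f
      · subst hxf; simp [hf, hxe]
      · simp [hxe, hxf]

theorem IsFlipSeq.symm {n ℓ : ℕ} {T T' : Set (Finset ℕ)} {g : ℕ → Set (Finset ℕ)}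
    (h : IsFlipSeq n T T' ℓ g) : IsFlipSeq n T' T ℓ (fun i => g (ℓ - i)) := by
  obtain ⟨h0, hl, hs⟩ := h
  refine ⟨by simpa using hl, by simpa using h0, fun i hi => ?_⟩
  have := (hs (ℓ - (i + 1)) (by omega)).symm
  rwa [show ℓ - (i + 1) + 1 = ℓ - i by omega] at this

theorem flipDist_comm (n : ℕ) (T T' : Set (Finset ℕ)) : flipDist n T T' = flipDist n T' T := by
  unfold flipDist
  congr 1
  ext ℓ
  exact ⟨fun ⟨_, hg⟩ => ⟨_, hg.symm⟩, fun ⟨_, hg⟩ => ⟨_, hg.symm⟩⟩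

/-- The case in which `v` is the cyclic predecessor of `u`. -/
theorem flipDist_fan_pred {n u v : ℕ} (hn : 3 ≤ n) (hu : u < n) (hv : v = vtx n u (n - 1)) :
    flipDist n (fanTri n u) (fanTri n v) = n - 3 := by
  have h0 : fanTri n u = zigTri n u (n - 2) := by
    have := fanTri_eq_zigTri (r := 0) (m := n - 2) hn hu (by omega)
    rwa [vtx_zero hu] at this
  rw [h0, hv, fanTri_eq_zigTri (m := 1) hn hu (by omega)]
  exact flipDist_zigTri hn hu

/-- For `n ≥ 3` and adjacent vertices `u`, `v` of the convex
`n`-gon, the flip distance between the fan triangulation at `u` and the fan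
triangulation at `v` equals `n − 3`. -/
theorem flip_distance_fans_adjacent
    (n : ℕ) (hn : 3 ≤ n) (u v : ℕ) (hu : u < n) (hv : v < n)
    (huv : BoundaryEdge n ({u, v} : Finset ℕ)) :
    flipDist n (fanTri n u) (fanTri n v) = n - 3 := by
  have h : v = vtx n u (n - 1) ∨ u = vtx n v (n - 1) := by
    rw [boundary_pair hn] at huv
    unfold vtx
    split_ifs <;> omega
  rcases h with h | h
  · exact flipDist_fan_pred hn hu h
  · rw [flipDist_comm]
    exact flipDist_fan_pred hn hv h
end
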